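/- arXiv:2102.11306 — 2 statements merged into one kernel-verified Lean document; each statement's English description precedes it below -/
import Mathlib

section
/- Let w ∈ 𝒱 be a generalized snake word of length n. Then there exists a bijection between the collection 𝒢(w) of nonempty subsets of {0, …, n} inducing connected subgraphs of G(w) and the collection of circuits of the vertex set V(Q_w) of the order polytope O(Q_w); in particular, the number of circuits of V(Q_w) equals |𝒢(w)|. -/
/-- The two-letter alphabet `{L, R}` for generalized snake words. -/
inductive Letter : Type
  | L
  | R
  deriving DecidableEq

/-- The element of the generalized snake poset covered by `2m+2` (besides the relations
coming from `2m+3`): it is `2m-1` when the word turns at the `m`-th letter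
(i.e. `m = 1` and `w 1 = L`, or `m ≥ 2` and `w (m-1) ≠ w m`), and `2m` otherwise. -/
def snakeSide (w : ℕ → Letter) (m : ℕ) : ℕ :=
  if (m = 1 ∧ w 1 = Letter.L) ∨ (2 ≤ m ∧ w (m - 1) ≠ w m) then 2 * m - 1 else 2 * m

/-- The covering relation of the generalized snake poset `P(w)` for the word
`ε w₁ ⋯ w_n` (the letter `w i` for `1 ≤ i ≤ n` is the `i`-th letter).
`SnakeCov n w a b` means `a ≺ b`, i.e. `a` is covered by `b`. -/
inductive SnakeCov (n : ℕ) (w : ℕ → Letter) : ℕ → ℕ → Prop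
  | cov10 : SnakeCov n w 1 0
  | cov20 : SnakeCov n w 2 0
  | cov31 : SnakeCov n w 3 1
  | cov32 : SnakeCov n w 3 2
  | covOdd (m : ℕ) (h1 : 1 ≤ m) (h2 : m ≤ n) : SnakeCov n w (2 * m + 3) (2 * m + 1)
  | covBot (m : ℕ) (h1 : 1 ≤ m) (h2 : m ≤ n) : SnakeCov n w (2 * m + 3) (2 * m + 2)
  | covSide (m : ℕ) (h1 : 1 ≤ m) (h2 : m ≤ n) : SnakeCov n w (2 * m + 2) (snakeSide w m)

/-- The order relation of the generalized snake poset `P(w)` on `{0, …, 2n+3}`: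
the reflexive-transitive closure of the covering relation. -/
def SnakeLE (n : ℕ) (w : ℕ → Letter) : ℕ → ℕ → Prop :=
  Relation.ReflTransGen (SnakeCov n w)

theorem snakeCov_lt {n : ℕ} {w : ℕ → Letter} {a b : ℕ} (h : SnakeCov n w a b) : b < a := by
  cases h
  case covSide m h1 h2 => unfold snakeSide; split <;> omega
  all_goals omega

theorem snakeLE_le {n : ℕ} {w : ℕ → Letter} {a b : ℕ} (h : SnakeLE n w a b) : b ≤ a := by
  induction h with
  | refl => exact le_refl a
  | tail _ hc ih => exact le_trans (le_of_lt (snakeCov_lt hc)) ih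

/-- The generalized snake poset `P(ε w₁ ⋯ w_n)` as a type: its elements are `0, 1, …, 2n+3`. -/
def SnakePoset (n : ℕ) (w : ℕ → Letter) : Type := Fin (2 * n + 4)

instance (n : ℕ) (w : ℕ → Letter) : PartialOrder (SnakePoset n w) where
  le a b := SnakeLE n w a.1 b.1
  le_refl _ := Relation.ReflTransGen.refl
  le_trans _ _ _ h1 h2 := Relation.ReflTransGen.trans h1 h2
  le_antisymm a b h1 h2 := Fin.ext (Nat.le_antisymm (snakeLE_le h2) (snakeLE_le h1))

/-- The number of linear extensions of `P(ε w₁ ⋯ w_n)`: order-preserving bijections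
onto the chain `Fin (2n+4)`.  By Stanley's theorem this is the normalized volume of
the order polytope `O(P(w))`. -/
noncomputable def linExtCount (n : ℕ) (w : ℕ → Letter) : ℕ :=
  Nat.card {f : SnakePoset n w ≃ Fin (2 * n + 4) //
    ∀ a b : SnakePoset n w, a ≤ b → f a ≤ f b}

/-- The collection of filters (upper order ideals) of `P(ε w₁ ⋯ w_n)`,
as subsets of `{0, …, 2n+3} ⊆ ℕ`. -/
def SnakeFilters (n : ℕ) (w : ℕ → Letter) : Set (Set ℕ) :=
  {A | (∀ a ∈ A, a < 2 * n + 4) ∧ ∀ a ∈ A, ∀ b, SnakeLE n w a b → b ∈ A}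

/-- The filter of `P(ε w₁ ⋯ w_n)` generated by a set `S`: its upward closure. -/
def snakeUp (n : ℕ) (w : ℕ → Letter) (S : Set ℕ) : Set ℕ :=
  {b | ∃ a ∈ S, SnakeLE n w a b}

/-- The alternating word `L R L R ⋯` (letter `i` is `L` for odd `i`),
defining the snake poset `S_n = P(ε L R L R ⋯)`. -/
def altWord : ℕ → Letter := fun i => if i % 2 = 1 then Letter.L else Letter.R

/-- Flipping a letter `L ↔ R`. -/
def Letter.flip : Letter → Letter
  | Letter.L => Letter.R
  | Letter.R => Letter.L

/-- The swap operation `f_i`: flip all letters with index `≥ i`. -/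
def swapFrom (w : ℕ → Letter) (i : ℕ) : ℕ → Letter :=
  fun j => if i ≤ j then (w j).flip else w j

/-- Membership in `𝒱`: the letter sequence `w₁ ⋯ w_n` contains neither `LRL` nor
`RLR` as a consecutive substring. -/
def InV (n : ℕ) (w : ℕ → Letter) : Prop :=
  ∀ i, 1 ≤ i → i + 2 ≤ n → w i = w (i + 1) ∨ w (i + 1) = w (i + 2)

/-- The order on `{0, …, 2n+5}` making `P̂(w)`: the poset `P(w)` (elements `0, …, 2n+3`)
with a new maximum `2n+4` and a new minimum `2n+5` adjoined. -/
def SnakeHatLE (n : ℕ) (w : ℕ → Letter) (a b : ℕ) : Prop :=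
  a = 2 * n + 5 ∨ b = 2 * n + 4 ∨ (a < 2 * n + 4 ∧ b < 2 * n + 4 ∧ SnakeLE n w a b)

/-- The lattice `P̂(w)`: `P(w)` with a new minimum `0̂ = 2n+5` and maximum `1̂ = 2n+4`. -/
def SnakeHat (n : ℕ) (w : ℕ → Letter) : Type := Fin (2 * n + 6)

instance (n : ℕ) (w : ℕ → Letter) : PartialOrder (SnakeHat n w) where
  le a b := SnakeHatLE n w a.1 b.1
  le_refl a := by
    by_cases h5 : a.1 = 2 * n + 5
    · exact Or.inl h5
    · by_cases h4 : a.1 = 2 * n + 4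
      · exact Or.inr (Or.inl h4)
      · have := a.2
        exact Or.inr (Or.inr ⟨by omega, by omega, Relation.ReflTransGen.refl⟩)
  le_trans a b c hab hbc := by
    rcases hab with h | h | ⟨ha, hb, hab⟩
    · exact Or.inl h
    · rcases hbc with h' | h' | ⟨hb', hc, hbc⟩
      · exact absurd h' (by omega)
      · exact Or.inr (Or.inl h')
      · exact absurd h (by omega)
    · rcases hbc with h' | h' | ⟨hb', hc, hbc⟩
      · exact absurd h' (by omega)
      · exact Or.inr (Or.inl h')
      · exact Or.inr (Or.inr ⟨ha, hc, Relation.ReflTransGen.trans hab hbc⟩)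
  le_antisymm a b h1 h2 := by
    apply Fin.ext
    rcases h1 with h | h | ⟨ha, hb, hab⟩ <;>
      rcases h2 with h' | h' | ⟨ha', hb', hba⟩ <;>
        first
          | omega
          | exact Nat.le_antisymm (snakeLE_le hba) (snakeLE_le hab)

/-- An element `x` of a (finite) lattice is meet-irreducible if it is not the maximum
element and whenever `x` is the meet (greatest lower bound) of `y` and `z`,
one has `x = y` or `x = z`. -/
def MeetIrred {α : Type*} [PartialOrder α] (x : α) : Prop :=
  ¬IsTop x ∧ ∀ y z : α, IsGLB {y, z} x → x = y ∨ x = z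

/-- The poset `Q_w` of meet-irreducible elements of `P̂(w)`, as an induced subposet. -/
abbrev SnakeQ (n : ℕ) (w : ℕ → Letter) : Type :=
  {x : SnakeHat n w // MeetIrred x}

/-- The vertex set of the order polytope `O(α)` of a finite poset `α`: the 0/1 indicator
vectors of the filters of `α`. -/
def OPVertexSet (α : Type*) [PartialOrder α] : Set (α → ℝ) :=
  {v | ∃ A : Set α, (∀ a ∈ A, ∀ b, a ≤ b → b ∈ A) ∧ v = A.indicator fun _ => (1 : ℝ)}

/-- A circuit of a point configuration: an affinely dependent set all of whose proper
subsets are affinely independent. -/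
def IsAffCircuit {α : Type*} (Z : Set (α → ℝ)) : Prop :=
  ¬AffineIndependent ℝ (Subtype.val : Z → (α → ℝ)) ∧
    ∀ Y : Set (α → ℝ), Y ⊂ Z → AffineIndependent ℝ (Subtype.val : Y → (α → ℝ))

/-- The adjacency relation of the graph `G(w)` on vertices `{0, 1, …, n}`:
consecutive indices are adjacent, and `i` and `i+2` are adjacent when
`w (i+1) ≠ w (i+2)` (a turn of the word). -/
def snakeAdj (n : ℕ) (w : ℕ → Letter) (i j : ℕ) : Prop :=
  (j = i + 1 ∧ j ≤ n) ∨ (i = j + 1 ∧ i ≤ n) ∨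
    (j = i + 2 ∧ j ≤ n ∧ w (i + 1) ≠ w (i + 2)) ∨
    (i = j + 2 ∧ i ≤ n ∧ w (j + 1) ≠ w (j + 2))

/-- `𝒢(w)`: the collection of nonempty subsets of `{0, …, n}` inducing connected
subgraphs of `G(w)`. -/
def GSets (n : ℕ) (w : ℕ → Letter) : Set (Set ℕ) :=
  {S | S.Nonempty ∧ (∀ i ∈ S, i ≤ n) ∧
    ∀ a ∈ S, ∀ b ∈ S,
      Relation.ReflTransGen (fun x y => x ∈ S ∧ y ∈ S ∧ snakeAdj n w x y) a b}


/-- gap condition for `S` -/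
def GapC (n : ℕ) (w : ℕ → Letter) (S : Set ℕ) : Prop :=
  S.Nonempty ∧ (∀ i ∈ S, i ≤ n) ∧ ∀ a ∈ S, ∀ b ∈ S, ∀ k, a < k → k < b → k ∉ S →
    ∃ j, k = j + 1 ∧ j ∈ S ∧ j + 2 ∈ S ∧ j + 2 ≤ n ∧ w (j+1) ≠ w (j+2)

theorem gap_of_G {n : ℕ} {w : ℕ → Letter} {S : Set ℕ} (h : S ∈ GSets n w) : GapC n w S := by
  obtain ⟨h1, h2, h3⟩ := h
  refine ⟨h1, h2, ?_⟩
  intro a ha b hb k hak hkb hk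
  have := h3 a ha b hb
  clear h3
  induction this with
  | refl => omega
  | @tail x y hax hxy ih =>
    obtain ⟨hx, hy, hadj⟩ := hxy
    by_cases hkx : k < x
    · exact ih hx hkx
    · have : x ≠ k := fun e => hk (e ▸ hx)
      rcases hadj with h | h | h | h
      · omega
      · omega
      · obtain ⟨rfl, h, h'⟩ := h
        have : k = x + 1 := by omega
        exact ⟨x, this, hx, hy, h, h'⟩
      · omega

theorem G_of_gap {n : ℕ} {w : ℕ → Letter} {S : Set ℕ} (h : GapC n w S) : S ∈ GSets n w := by
  obtain ⟨h1, h2, h3⟩ := h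
  refine ⟨h1, h2, ?_⟩
  have key : ∀ b, b ∈ S → ∀ a ∈ S, a ≤ b →
      Relation.ReflTransGen (fun x y => x ∈ S ∧ y ∈ S ∧ snakeAdj n w x y) a b ∧
      Relation.ReflTransGen (fun x y => x ∈ S ∧ y ∈ S ∧ snakeAdj n w x y) b a := by
    intro b
    induction b using Nat.strong_induction_on with
    | _ b ih =>
      intro hb a ha hab
      rcases hab.eq_or_lt with rfl | hab
      · exact ⟨.refl, .refl⟩
      · obtain ⟨b, rfl⟩ : ∃ c, b = c + 1 := ⟨b - 1, by omega⟩
        have hbn := h2 _ hb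
        by_cases hb' : b ∈ S
        · obtain ⟨i1, i2⟩ := ih b (by omega) hb' a ha (by omega)
          exact ⟨i1.tail ⟨hb', hb, Or.inl ⟨rfl, hbn⟩⟩,
            .head ⟨hb, hb', Or.inr (Or.inl ⟨rfl, hbn⟩)⟩ i2⟩
        · have hab' : a ≠ b := fun e => hb' (e ▸ ha)
          obtain ⟨j, rfl, hj, hj2, hn, ht⟩ := h3 a ha _ hb b (by omega) (by omega) hb'
          obtain ⟨i1, i2⟩ := ih j (by omega) hj a ha (by omega)
          exact ⟨i1.tail ⟨hj, hb, Or.inr (Or.inr (Or.inl ⟨rfl, hn, ht⟩))⟩,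
            .head ⟨hb, hj, Or.inr (Or.inr (Or.inr ⟨rfl, hn, ht⟩))⟩ i2⟩
  intro a ha b hb
  rcases le_total a b with h | h
  · exact (key b hb a ha h).1
  · exact (key a ha b hb h).2

open Classical in
/-- signed indicator -/
noncomputable def sgnV (S : Set ℕ) (j : ℕ) : ℝ :=
  if j ∈ S then (-1) ^ ((Finset.range j).filter (fun k => k ∉ S)).card else 0

theorem sgnV_zero {S : Set ℕ} {j : ℕ} : sgnV S j = 0 ↔ j ∉ S := by
  unfold sgnV; split <;> simp_all

theorem sgnV_succ {S : Set ℕ} {j : ℕ} (h : j ∈ S) (h' : j + 1 ∈ S) :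
    sgnV S (j+1) = sgnV S j := by
  simp [sgnV, h, h', Finset.range_add_one, Finset.filter_insert]

theorem sgnV_skip {S : Set ℕ} {j : ℕ} (h : j ∈ S) (h1 : j + 1 ∉ S) (h' : j + 2 ∈ S) :
    sgnV S (j+2) = - sgnV S j := by
  simp [sgnV, h, h', h1, Finset.range_add_one, Finset.filter_insert, pow_succ]

/-- zero-pattern implication -/
def ECond (n : ℕ) (w : ℕ → Letter) (c d : ℕ → ℝ) : Prop :=
  (c 0 = 0 → d 0 = 0) ∧ (c n = 0 → d n = 0) ∧ (∀ k, k < n → c k = c (k+1) → d k = d (k+1)) ∧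
  (∀ k, k + 2 ≤ n → w (k+1) ≠ w (k+2) → c (k+1) = 0 → d (k+1) = 0) ∧
  (∀ k, k + 2 ≤ n → w (k+1) ≠ w (k+2) → c k - c (k+1) + c (k+2) = 0 →
    d k - d (k+1) + d (k+2) = 0)

theorem lemB {n : ℕ} {w : ℕ → Letter} {S : Set ℕ} (hS : GapC n w S) {c : ℕ → ℝ}
    (h : ECond n w (sgnV S) c) : ∃ t : ℝ, ∀ k ≤ n, c k = t * sgnV S k := by
  classical
  obtain ⟨h1, h2, h3⟩ := hS
  obtain ⟨e0, en, e1, e2, e3⟩ := h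
  let a := Nat.find h1
  have ha : a ∈ S := Nat.find_spec h1
  have hmin : ∀ k, k < a → k ∉ S := fun k hk => Nat.find_min h1 hk
  have hda : sgnV S a ≠ 0 := fun h => (sgnV_zero.1 h) ha
  -- right tail
  have tail : ∀ i k, i + k = n → (∀ j, k ≤ j → j ∉ S) → c k = 0 := by
    intro i
    induction i with
    | zero => 
      intro k hk hj
      obtain rfl : k = n := by omega
      exact en (sgnV_zero.2 (hj k le_rfl))
    | succ i ih =>
      intro k hk hj
      rw [e1 k (by omega)]
      · exact ih (k+1) (by omega) (fun j hj' => hj j (by omega))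
      · rw [sgnV_zero.2 (hj k le_rfl), sgnV_zero.2 (hj (k+1) (by omega))]
  refine ⟨c a / sgnV S a, ?_⟩
  intro k
  induction k using Nat.strong_induction_on with
  | _ k ih =>
    intro hk
    rcases lt_trichotomy k a with hka | hka | hka
    · rw [sgnV_zero.2 (hmin k hka), mul_zero]
      rcases Nat.eq_zero_or_pos k with rfl | hp
      · exact e0 (sgnV_zero.2 (hmin _ hka))
      · obtain ⟨k, rfl⟩ : ∃ c, k = c + 1 := ⟨k - 1, by omega⟩
        have := ih k (by omega) (by omega)
        rw [sgnV_zero.2 (hmin k (by omega)), mul_zero] at this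
        rw [← this]
        symm
        apply e1 k (by omega)
        rw [sgnV_zero.2 (hmin k (by omega)), sgnV_zero.2 (hmin _ hka)]
    · rw [hka]; field_simp
    · by_cases hkS : k ∈ S
      · obtain ⟨k, rfl⟩ : ∃ c, k = c + 1 := ⟨k - 1, by omega⟩
        have i1 := ih k (by omega) (by omega)
        by_cases hk' : k ∈ S
        · have := sgnV_succ hk' hkS
          rw [this, ← i1]
          exact (e1 k (by omega) this.symm).symm
        · have : a ≠ k := fun e => hk' (e ▸ ha)
          obtain ⟨j, rfl, hj, hj2, hn, ht⟩ := h3 a ha _ hkS k (by omega) (by omega) hk'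
          have i2 := ih j (by omega) (by omega)
          have s1 := sgnV_skip hj hk' hkS
          have s2 := sgnV_zero.2 hk'
          have := e3 j hn ht (by rw [s1, s2]; ring)
          rw [s2] at i1
          show c (j+2) = _ * sgnV S (j+2)
          rw [s1]
          linarith
      · rw [sgnV_zero.2 hkS, mul_zero]
        by_cases hb : ∃ b ∈ S, k < b
        · obtain ⟨b, hb, hkb⟩ := hb
          obtain ⟨j, rfl, hj, hj2, hn, ht⟩ := h3 a ha _ hb k (by omega) (by omega) hkS
          exact e2 j hn ht (sgnV_zero.2 hkS)
        · push Not at hb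
          refine tail (n - k) k (by omega) (fun j hj hjS => ?_)
          have := hb j hjS
          obtain rfl : j = k := by omega
          exact hkS hjS

theorem lemA_aux {n : ℕ} {w : ℕ → Letter} (hw : InV n w) (c : ℕ → ℝ) :
    ∀ i j, i + j = n → c j ≠ 0 → ∃ S : Set ℕ, j ∈ S ∧ (∀ k ∈ S, j ≤ k ∧ k ≤ n ∧ c k ≠ 0) ∧
      GapC n w S ∧ (∀ k, j ≤ k → k < n → c k = c (k+1) → (k ∈ S ↔ k + 1 ∈ S)) ∧
      (∀ k, j ≤ k → k + 2 ≤ n → w (k+1) ≠ w (k+2) → c k - c (k+1) + c (k+2) = 0 →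
        (k ∈ S ↔ (k + 1 ∈ S ↔ k + 2 ∉ S))) := by
  intro i
  induction i using Nat.strong_induction_on with
  | _ i ih =>
    intro j hij hcj
    have ext : ∀ (r : ℕ) (S : Set ℕ), j < r → r ∈ S → (∀ k ∈ S, r ≤ k ∧ k ≤ n ∧ c k ≠ 0) → GapC n w S →
        (r = j + 1 ∨ (r = j + 2 ∧ w (j+1) ≠ w (j+2))) → GapC n w (insert j S) := by
      intro r S hjr hr hS1 ⟨_, hS2, hS3⟩ hcase
      refine ⟨⟨j, by simp⟩, ?_, ?_⟩
      · intro k hk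
        rcases hk with rfl | hk
        · omega
        · exact hS2 k hk
      · intro x hx y hy k hxk hky hk
        have hkj : k ≠ j := fun e => hk (by simp [e])
        have hkS : k ∉ S := fun e => hk (by simp [e])
        have hyS : y ∈ S := by
          rcases hy with rfl | hy
          · rcases hx with rfl | hx
            · omega
            · have := (hS1 x hx).1; omega
          · exact hy
        have hxj : j ≤ x := by
          rcases hx with rfl | hx
          · exact le_rfl
          · have := (hS1 x hx).1; omega
        by_cases hkr : k < r
        · rcases hcase with rfl | ⟨rfl, ht⟩
          · omega
          · exact ⟨j, by omega, by simp, by simp [hr], (hS1 _ hr).2.1, ht⟩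
        · have : k ≠ r := fun e => hkS (e ▸ hr)
          obtain ⟨m, e, m1, m2, m3, m4⟩ := hS3 r hr y hyS k (by omega) hky hkS
          exact ⟨m, e, by simp [m1], by simp [m2], m3, m4⟩
    have gap1 : ∀ m ≤ n, GapC n w {m} := by
      intro m hm
      refine ⟨⟨m, rfl⟩, ?_, ?_⟩
      · rintro _ rfl; exact hm
      · rintro a rfl b rfl k h1 h2; omega
    have hstp : (j < n → c j ≠ c (j+1)) → (j + 2 ≤ n → w (j+1) ≠ w (j+2) → c j - c (j+1) + c (j+2) ≠ 0) →
       ∃ S : Set ℕ, j ∈ S ∧ (∀ k ∈ S, j ≤ k ∧ k ≤ n ∧ c k ≠ 0) ∧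
      GapC n w S ∧ (∀ k, j ≤ k → k < n → c k = c (k+1) → (k ∈ S ↔ k + 1 ∈ S)) ∧
      (∀ k, j ≤ k → k + 2 ≤ n → w (k+1) ≠ w (k+2) → c k - c (k+1) + c (k+2) = 0 →
        (k ∈ S ↔ (k + 1 ∈ S ↔ k + 2 ∉ S))) := by
      intro n1 n2
      refine ⟨{j}, rfl, ?_, gap1 j (by omega), ?_, ?_⟩
      · rintro _ rfl; exact ⟨le_rfl, by omega, hcj⟩
      · intro k hk hkn hc
        have : k ≠ j := by rintro rfl; exact n1 hkn hc
        simp; omega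
      · intro k hk hkn ht hc
        have : k ≠ j := by rintro rfl; exact n2 hkn ht hc
        simp; omega
    by_cases hjn : j = n
    · exact hstp (by omega) (by omega)
    by_cases heq : c (j+1) = c j
    · obtain ⟨S, s1, s2, s3, s4, s5⟩ := ih (i-1) (by omega) (j+1) (by omega) (by rwa [heq])
      refine ⟨insert j S, by simp, ?_, ext (j+1) S (by omega) s1 s2 s3 (Or.inl rfl), ?_, ?_⟩
      · rintro k (rfl | hk)
        · exact ⟨le_rfl, by omega, hcj⟩
        · have := s2 k hk
          exact ⟨by omega, this.2⟩
      · intro k hk hkn hc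
        rcases hk.eq_or_lt with rfl | hk
        · simp [s1]
        · have := s4 k hk hkn hc
          simp only [Set.mem_insert_iff]
          rw [this]
          have h1 : k ≠ j := by omega
          have h2 : k + 1 ≠ j := by omega
          simp [h1, h2]
      · intro k hk hkn ht hc
        rcases hk.eq_or_lt with rfl | hk
        · have : j + 2 ∉ S := fun h => (s2 _ h).2.2 (by linarith)
          simp [s1, this]
        · have := s5 k hk hkn ht hc
          simp only [Set.mem_insert_iff]
          have h1 : k ≠ j := by omega
          have h2 : k + 1 ≠ j := by omega
          have h3 : k + 2 ≠ j := by omega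
          simpa [h1, h2, h3] using this
    by_cases hK : j + 2 ≤ n ∧ w (j+1) ≠ w (j+2) ∧ c j - c (j+1) + c (j+2) = 0
    swap
    · exact hstp (fun _ h => heq h.symm) (fun h h' h'' => hK ⟨h, h', h''⟩)
    obtain ⟨k1, k2, k3⟩ := hK
    have nadj : ∀ k, k = j + 1 → k + 2 ≤ n → w (k+1) ≠ w (k+2) → False := by
      rintro k rfl h1 h2
      rcases hw (j+1) (by omega) (by omega) with h | h
      · exact k2 h
      · exact h2 h
    by_cases hz : c (j+1) = 0
    · obtain ⟨S, s1, s2, s3, s4, s5⟩ := ih (i-2) (by omega) (j+2) (by omega)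
        (by intro h; apply hcj; linarith)
      have hj1 : j + 1 ∉ S := fun h => (s2 _ h).2.2 hz
      refine ⟨insert j S, by simp, ?_, ext (j+2) S (by omega) s1 s2 s3 (Or.inr ⟨rfl, k2⟩), ?_, ?_⟩
      · rintro k (rfl | hk)
        · exact ⟨le_rfl, by omega, hcj⟩
        · have := s2 k hk
          exact ⟨by omega, this.2⟩
      · intro k hk hkn hc
        rcases hk.eq_or_lt with rfl | hk
        · exact absurd hc.symm heq
        rcases (Nat.succ_le_of_lt hk).eq_or_lt with rfl | hk
        · exfalso; apply hcj
          have : c (j+1) = c (j+2) := hc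
          linarith
        · have := s4 k hk hkn hc
          simp only [Set.mem_insert_iff]
          rw [this]
          have h1 : k ≠ j := by omega
          have h2 : k + 1 ≠ j := by omega
          simp [h1, h2]
      · intro k hk hkn ht hc
        rcases hk.eq_or_lt with rfl | hk
        · simp [s1, hj1]
        rcases (Nat.succ_le_of_lt hk).eq_or_lt with rfl | hk
        · exact (nadj _ rfl hkn ht).elim
        · have := s5 k hk hkn ht hc
          simp only [Set.mem_insert_iff]
          have h1 : k ≠ j := by omega
          have h2 : k + 1 ≠ j := by omega
          have h3 : k + 2 ≠ j := by omega
          simpa [h1, h2, h3] using this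
    · have g1 := gap1 (j+1) (by omega)
      have hs : ∀ k ∈ ({j+1} : Set ℕ), j + 1 ≤ k ∧ k ≤ n ∧ c k ≠ 0 := by
        rintro k rfl
        exact ⟨le_rfl, by omega, hz⟩
      refine ⟨insert j {j+1}, by simp, ?_, ext (j+1) _ (by omega) rfl hs g1 (Or.inl rfl), ?_, ?_⟩
      · rintro k (rfl | rfl)
        · exact ⟨le_rfl, by omega, hcj⟩
        · exact ⟨by omega, by omega, hz⟩
      · intro k hk hkn hc
        rcases hk.eq_or_lt with rfl | hk
        · simp
        rcases (Nat.succ_le_of_lt hk).eq_or_lt with rfl | hk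
        · exfalso; apply hcj
          have : c (j+1) = c (j+2) := hc
          linarith
        · simp; omega
      · intro k hk hkn ht hc
        rcases hk.eq_or_lt with rfl | hk
        · simp
        rcases (Nat.succ_le_of_lt hk).eq_or_lt with rfl | hk
        · exact (nadj _ rfl hkn ht).elim
        · simp; omega

theorem lemA {n : ℕ} {w : ℕ → Letter} (hw : InV n w) (c : ℕ → ℝ) (hc : ∃ k, k ≤ n ∧ c k ≠ 0) :
    ∃ S, GapC n w S ∧ ECond n w c (sgnV S) := by
  classical
  let a := Nat.find hc
  obtain ⟨han, hca⟩ : a ≤ n ∧ c a ≠ 0 := Nat.find_spec hc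
  have hmin : ∀ k, k < a → c k = 0 := fun k hk => by
    have := Nat.find_min hc hk
    by_contra h
    exact this ⟨by omega, h⟩
  obtain ⟨S, s1, s2, s3, s4, s5⟩ := lemA_aux hw c (n - a) a (by omega) hca
  have nz : ∀ k, c k = 0 → sgnV S k = 0 := fun k hk => sgnV_zero.2 (fun h => (s2 k h).2.2 hk)
  have lt : ∀ k, k < a → k ∉ S := fun k hk h => by have := (s2 k h).1; omega
  have m4 : ∀ k < n, c k = c (k+1) → (k ∈ S ↔ k + 1 ∈ S) := by
    intro k hk hkc
    by_cases h : a ≤ k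
    · exact s4 k h hk hkc
    · have h0 := hmin k (by omega)
      have : k + 1 ≠ a := by intro e; rw [← e] at hca; apply hca; rw [← hkc, h0]
      simp [lt k (by omega), lt (k+1) (by omega)]
  refine ⟨S, s3, nz 0, nz n, ?_, fun k _ _ => nz (k+1), ?_⟩
  · intro k hk hkc
    have := m4 k hk hkc
    by_cases h : k ∈ S
    · exact (sgnV_succ h (this.1 h)).symm
    · rw [sgnV_zero.2 h, sgnV_zero.2 (fun h' => h (this.2 h'))]
  · intro k hk ht hkc
    have par : (k ∈ S ↔ (k + 1 ∈ S ↔ k + 2 ∉ S)) := by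
      by_cases h : a ≤ k
      · exact s5 k h hk ht hkc
      · have h0 := hmin k (by omega)
        have hk0 := lt k (by omega)
        by_cases h1 : k + 1 < a
        · have h10 := hmin _ h1
          have : k + 2 ≠ a := by intro e; rw [← e] at hca; apply hca; linarith
          simp [hk0, lt (k+1) h1, lt (k+2) (by omega)]
        · have := m4 (k+1) (by omega) (by show c (k+1) = c (k+2); linarith)
          simp only [hk0, false_iff, this]
          tauto
    by_cases h0 : k ∈ S <;> by_cases h1 : k + 1 ∈ S <;> by_cases h2 : k + 2 ∈ S <;>
      simp [h0, h1, h2] at par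
    · rw [sgnV_zero.2 h2, sgnV_succ h0 h1]; ring
    · rw [sgnV_skip h0 h1 h2, sgnV_zero.2 h1]; ring
    · rw [sgnV_zero.2 h0, show sgnV S (k+2) = sgnV S (k+1) from sgnV_succ h1 h2]; ring
    · simp [sgnV_zero.2 h0, sgnV_zero.2 h1, sgnV_zero.2 h2]


/-- turn predicate -/
def TurnP (w : ℕ → Letter) (m : ℕ) : Prop :=
  (m = 1 ∧ w 1 = Letter.L) ∨ (2 ≤ m ∧ w (m - 1) ≠ w m)

theorem side_turn {w : ℕ → Letter} {m : ℕ} (h : TurnP w m) : snakeSide w m = 2 * m - 1 := by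
  unfold snakeSide; exact if_pos h

theorem side_straight {w : ℕ → Letter} {m : ℕ} (h : ¬ TurnP w m) : snakeSide w m = 2 * m := by
  unfold snakeSide; exact if_neg h

theorem turn_pos {w : ℕ → Letter} {m : ℕ} (h : TurnP w m) : 1 ≤ m := by
  rcases h with h | h <;> omega

/-- the square relation -/
def sqc (w : ℕ → Letter) (m x : ℕ) : ℝ :=
  (if x = snakeSide w m then 1 else 0) - (if x = 2 * m + 1 then 1 else 0)
    - (if x = 2 * m + 2 then 1 else 0) + (if x = 2 * m + 3 then 1 else 0)

/-- combination of squares -/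
def sqv (n : ℕ) (w : ℕ → Letter) (c : ℕ → ℝ) (x : ℕ) : ℝ :=
  ∑ m ∈ Finset.range (n+1), c m * sqc w m x

open Classical in
theorem pick_sum (n : ℕ) (c : ℕ → ℝ) (P : ℕ → Prop) [DecidablePred P] (k : ℕ) (Q : Prop)
    (h : ∀ m, P m ↔ m = k ∧ Q) :
    ∑ m ∈ Finset.range (n+1), c m * (if P m then 1 else 0) = if Q ∧ k ≤ n then c k else 0 := by
  simp only [h]
  by_cases hQ : Q
  · simp [hQ]
  · simp [hQ]

theorem sqv_split (n : ℕ) (w : ℕ → Letter) (c : ℕ → ℝ) (x : ℕ) :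
    sqv n w c x = ∑ m ∈ Finset.range (n+1), c m * (if x = snakeSide w m then 1 else 0)
      - ∑ m ∈ Finset.range (n+1), c m * (if x = 2 * m + 1 then 1 else 0)
      - ∑ m ∈ Finset.range (n+1), c m * (if x = 2 * m + 2 then 1 else 0)
      + ∑ m ∈ Finset.range (n+1), c m * (if x = 2 * m + 3 then 1 else 0) := by
  unfold sqv sqc
  rw [← Finset.sum_sub_distrib, ← Finset.sum_sub_distrib, ← Finset.sum_add_distrib]
  apply Finset.sum_congr rfl
  intros; ring

theorem side_cases (w : ℕ → Letter) (m : ℕ) :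
    (TurnP w m ∧ 1 ≤ m ∧ snakeSide w m = 2 * m - 1) ∨ (¬ TurnP w m ∧ snakeSide w m = 2 * m) := by
  by_cases h : TurnP w m
  · exact Or.inl ⟨h, turn_pos h, side_turn h⟩
  · exact Or.inr ⟨h, side_straight h⟩

theorem sqv_zero (n : ℕ) (w : ℕ → Letter) (c : ℕ → ℝ) : sqv n w c 0 = c 0 := by
  classical
  rw [sqv_split, pick_sum n c (fun m => 0 = snakeSide w m) 0 True]
  · simp
  · intro m
    simp only [and_true]
    rcases side_cases w m with ⟨_, h, h'⟩ | ⟨_, h⟩ <;> omega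

open Classical in
theorem sqv_odd (n : ℕ) (w : ℕ → Letter) (c : ℕ → ℝ) (k : ℕ) : sqv n w c (2 * k + 1) =
    (if TurnP w (k+1) ∧ k + 1 ≤ n then c (k+1) else 0) - (if k ≤ n then c k else 0)
     + (if 1 ≤ k ∧ k - 1 ≤ n then c (k-1) else 0) := by
  rw [sqv_split, pick_sum n c (fun m => 2 * k + 1 = snakeSide w m) (k+1) (TurnP w (k+1)),
    pick_sum n c (fun m => 2 * k + 1 = 2 * m + 1) k True,
    pick_sum n c (fun m => 2 * k + 1 = 2 * m + 2) k False,
    pick_sum n c (fun m => 2 * k + 1 = 2 * m + 3) (k-1) (1 ≤ k)]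
  · simp
  · intro m; simp -failIfUnchanged only [and_true, and_false, iff_false]; omega
  · intro m; simp -failIfUnchanged only [and_true, and_false, iff_false]; omega
  · intro m; simp -failIfUnchanged only [and_true, and_false, iff_false]; omega
  · intro m
    rcases side_cases w m with ⟨h1, h, h'⟩ | ⟨h1, h⟩
    · constructor
      · intro h2
        obtain rfl : m = k + 1 := by omega
        exact ⟨rfl, h1⟩
      · rintro ⟨rfl, _⟩; omega
    · constructor
      · omega
      · rintro ⟨rfl, h2⟩; exact absurd h2 h1

open Classical in
theorem sqv_even (n : ℕ) (w : ℕ → Letter) (c : ℕ → ℝ) (k : ℕ) : sqv n w c (2 * k + 2) =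
    (if ¬ TurnP w (k+1) ∧ k + 1 ≤ n then c (k+1) else 0) - (if k ≤ n then c k else 0) := by
  rw [sqv_split, pick_sum n c (fun m => 2 * k + 2 = snakeSide w m) (k+1) (¬ TurnP w (k+1)),
    pick_sum n c (fun m => 2 * k + 2 = 2 * m + 1) k False,
    pick_sum n c (fun m => 2 * k + 2 = 2 * m + 2) k True,
    pick_sum n c (fun m => 2 * k + 2 = 2 * m + 3) k False]
  · simp
  · intro m; simp -failIfUnchanged only [and_true, and_false, iff_false]; omega
  · intro m; simp -failIfUnchanged only [and_true, and_false, iff_false]; omega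
  · intro m; simp -failIfUnchanged only [and_true, and_false, iff_false]; omega
  · intro m
    rcases side_cases w m with ⟨h1, h, h'⟩ | ⟨h1, h⟩
    · constructor
      · omega
      · rintro ⟨rfl, h2⟩; exact absurd h1 h2
    · constructor
      · intro h2
        obtain rfl : m = k + 1 := by omega
        exact ⟨rfl, h1⟩
      · rintro ⟨rfl, _⟩; omega

theorem turn_succ {w : ℕ → Letter} {k : ℕ} : TurnP w (k+2) ↔ w (k+1) ≠ w (k+2) := by
  unfold TurnP
  constructor
  · rintro (h | h)
    · omega
    · exact h.2
  · intro h; exact Or.inr ⟨by omega, h⟩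

theorem E_of_supp {n : ℕ} {w : ℕ → Letter} (hw : InV n w) {c d : ℕ → ℝ}
    (h : ∀ x < 2 * n + 4, sqv n w c x = 0 → sqv n w d x = 0) : ECond n w c d := by
  refine ⟨?_, ?_, ?_, ?_, ?_⟩
  · have := h 0 (by omega)
    simpa only [sqv_zero] using this
  · have := h (2 * (n+1) + 1) (by omega)
    simpa [sqv_odd] using this
  · intro k hk hc
    by_cases hT : TurnP w (k+1)
    · rcases k with _ | k
      · have := h (2 * 0 + 1) (by omega)
        rw [sqv_odd, sqv_odd] at this
        simp [show TurnP w 1 from hT, show 1 ≤ n by omega] at this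
        have := this (by simp at hc; linarith)
        simp; linarith
      · have h2 : ¬ (TurnP w (k+1+1+1) ∧ k + 1 + 1 + 1 ≤ n) := by
          rintro ⟨h2, h3⟩
          have h1 := turn_succ.1 hT
          have h2 := turn_succ.1 h2
          rcases hw (k+1) (by omega) (by omega) with h | h
          · exact h1 h
          · exact h2 h
        have := h (2 * (k+1+1) + 1) (by omega)
        rw [sqv_odd, sqv_odd] at this
        simp only [if_neg h2, if_pos (show k + 1 + 1 ≤ n by omega), 
          if_pos (show 1 ≤ k + 1 + 1 ∧ k + 1 ≤ n by omega), Nat.add_sub_cancel] at this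
        have := this (by linarith)
        linarith
    · have := h (2 * k + 2) (by omega)
      rw [sqv_even, sqv_even] at this
      simp only [if_pos (show ¬ TurnP w (k+1) ∧ k + 1 ≤ n from ⟨hT, hk⟩),
        if_pos (show k ≤ n by omega)] at this
      have := this (by linarith)
      linarith
  · intro k hk ht hc
    have hT := turn_succ.2 ht
    have := h (2 * (k+1) + 2) (by omega)
    rw [sqv_even, sqv_even] at this
    simp only [if_neg (show ¬ (¬ TurnP w (k+1+1) ∧ k + 1 + 1 ≤ n) from fun h => h.1 hT),
        if_pos (show k + 1 ≤ n by omega)] at this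
    have := this (by linarith)
    linarith
  · intro k hk ht hc
    have hT := turn_succ.2 ht
    have := h (2 * (k+1) + 1) (by omega)
    rw [sqv_odd, sqv_odd] at this
    simp only [if_pos (show TurnP w (k+1+1) ∧ k + 1 + 1 ≤ n from ⟨hT, hk⟩),
        if_pos (show k + 1 ≤ n by omega), 
        if_pos (show 1 ≤ k + 1 ∧ k ≤ n by omega), Nat.add_sub_cancel] at this
    have := this (by show c (k+2) - _ + _ = 0; linarith)
    change d (k+2) - _ + _ = 0 at this
    linarith

theorem supp_of_E {n : ℕ} {w : ℕ → Letter} {c d : ℕ → ℝ}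
    (h : ECond n w c d) : ∀ x < 2 * n + 4, sqv n w c x = 0 → sqv n w d x = 0 := by
  obtain ⟨e0, en, e1, e2, e3⟩ := h
  intro x hx
  rcases Nat.eq_zero_or_pos x with rfl | hx0
  · simpa only [sqv_zero] using e0
  rcases Nat.even_or_odd' x with ⟨k, rfl | rfl⟩
  · obtain ⟨k, rfl⟩ : ∃ c, k = c + 1 := ⟨k - 1, by omega⟩
    rw [show 2 * (k+1) = 2 * k + 2 by ring, sqv_even, sqv_even]
    have hk : k ≤ n := by omega
    by_cases h1 : ¬ TurnP w (k+1) ∧ k + 1 ≤ n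
    · simp only [if_pos h1, if_pos hk]
      intro hc
      have := e1 k (by omega) (by linarith)
      linarith
    · simp only [if_neg h1, if_pos hk]
      intro hc
      rcases hk.eq_or_lt with rfl | hk
      · have := en (by linarith)
        linarith
      · have hT : TurnP w (k+1) := by by_contra h; exact h1 ⟨h, hk⟩
        rcases k with _ | k
        · have := e0 (by linarith)
          linarith
        · have := e2 k (by omega) (turn_succ.1 hT) (by linarith)
          linarith
  · rw [sqv_odd, sqv_odd]
    rcases k with _ | k
    · by_cases h1 : TurnP w (0+1) ∧ 0 + 1 ≤ n
      · simp only [if_pos h1]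
        intro hc
        simp at hc ⊢
        have := e1 0 (by omega) (by simp; linarith)
        simp at this; linarith
      · simp only [if_neg h1]
        intro hc
        simp at hc ⊢
        exact e0 hc
    · rcases (show k ≤ n by omega).eq_or_lt with rfl | hk
      · simpa using en
      · simp only [if_pos (show k + 1 ≤ n by omega), 
          if_pos (show 1 ≤ k + 1 ∧ k ≤ n by omega), Nat.add_sub_cancel]
        by_cases h1 : TurnP w (k+1+1) ∧ k + 1 + 1 ≤ n
        · simp only [if_pos h1]
          intro hc
          change c (k+2) - _ + _ = 0 at hc
          have := e3 k h1.2 (turn_succ.1 h1.1) (by linarith)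
          show d (k+2) - _ + _ = 0
          linarith
        · simp only [if_neg h1]
          intro hc
          have := e1 k hk (by linarith)
          linarith


theorem side_le (w : ℕ → Letter) (m : ℕ) : snakeSide w m ≤ 2 * m := by
  rcases side_cases w m with ⟨_, h, h'⟩ | ⟨_, h⟩ <;> omega

theorem cov_iff {n : ℕ} {w : ℕ → Letter} {a b : ℕ} : SnakeCov n w a b ↔ (a = 1 ∧ b = 0) ∨
    ∃ m, m ≤ n ∧ ((a = 2 * m + 2 ∧ b = snakeSide w m) ∨
      (a = 2 * m + 3 ∧ (b = 2 * m + 1 ∨ b = 2 * m + 2))) := by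
  have s0 : snakeSide w 0 = 0 := by have := side_le w 0; omega
  constructor
  · intro h
    cases h with
    | cov10 => simp
    | cov20 => exact Or.inr ⟨0, by omega, by simp [s0]⟩
    | cov31 => exact Or.inr ⟨0, by omega, by simp⟩
    | cov32 => exact Or.inr ⟨0, by omega, by simp⟩
    | covOdd m h1 h2 => exact Or.inr ⟨m, h2, by simp⟩
    | covBot m h1 h2 => exact Or.inr ⟨m, h2, by simp⟩
    | covSide m h1 h2 => exact Or.inr ⟨m, h2, by simp⟩
  · rintro (⟨rfl, rfl⟩ | ⟨m, hm, ⟨rfl, rfl⟩ | ⟨rfl, rfl | rfl⟩⟩)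
    · exact .cov10
    · rcases Nat.eq_zero_or_pos m with rfl | h
      · rw [s0]; exact .cov20
      · exact .covSide m h hm
    · rcases Nat.eq_zero_or_pos m with rfl | h
      · exact .cov31
      · exact .covOdd m h hm
    · rcases Nat.eq_zero_or_pos m with rfl | h
      · exact .cov32
      · exact .covBot m h hm

theorem le_zero {n : ℕ} {w : ℕ → Letter} {b : ℕ} : SnakeLE n w 0 b ↔ b = 0 := by
  constructor
  · intro h; have := snakeLE_le h; omega
  · rintro rfl; exact .refl

theorem le_one {n : ℕ} {w : ℕ → Letter} {b : ℕ} : SnakeLE n w 1 b ↔ b = 1 ∨ SnakeLE n w 0 b := by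
  unfold SnakeLE
  rw [Relation.ReflTransGen.cases_head_iff]
  constructor
  · rintro (h | ⟨c, hc, h⟩)
    · exact Or.inl h.symm
    · rcases cov_iff.1 hc with ⟨_, rfl⟩ | ⟨m, hm, h' | h'⟩
      · exact Or.inr h
      · omega
      · omega
  · rintro (h | h)
    · exact Or.inl h.symm
    · exact Or.inr ⟨0, .cov10, h⟩

theorem le_even {n : ℕ} {w : ℕ → Letter} {m b : ℕ} (hm : m ≤ n) :
    SnakeLE n w (2 * m + 2) b ↔ b = 2 * m + 2 ∨ SnakeLE n w (snakeSide w m) b := by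
  unfold SnakeLE
  rw [Relation.ReflTransGen.cases_head_iff]
  constructor
  · rintro (h | ⟨c, hc, h⟩)
    · exact Or.inl h.symm
    · rcases cov_iff.1 hc with h' | ⟨k, hk, h' | h'⟩
      · omega
      · obtain rfl : k = m := by omega
        rw [h'.2] at h
        exact Or.inr h
      · omega
  · rintro (h | h)
    · exact Or.inl h.symm
    · exact Or.inr ⟨_, cov_iff.2 (Or.inr ⟨m, hm, by simp⟩), h⟩

theorem le_odd {n : ℕ} {w : ℕ → Letter} {m b : ℕ} (hm : m ≤ n) :
    SnakeLE n w (2 * m + 3) b ↔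
      b = 2 * m + 3 ∨ SnakeLE n w (2 * m + 1) b ∨ SnakeLE n w (2 * m + 2) b := by
  unfold SnakeLE
  rw [Relation.ReflTransGen.cases_head_iff]
  constructor
  · rintro (h | ⟨c, hc, h⟩)
    · exact Or.inl h.symm
    · rcases cov_iff.1 hc with h' | ⟨k, hk, h' | h'⟩
      · omega
      · omega
      · obtain rfl : k = m := by omega
        rcases h'.2 with rfl | rfl
        · exact Or.inr (Or.inl h)
        · exact Or.inr (Or.inr h)
  · rintro (h | h | h)
    · exact Or.inl h.symm
    · exact Or.inr ⟨2 * m + 1, cov_iff.2 (Or.inr ⟨m, hm, by simp⟩), h⟩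
    · exact Or.inr ⟨2 * m + 2, cov_iff.2 (Or.inr ⟨m, hm, by simp⟩), h⟩

section hat
variable {n : ℕ} {w : ℕ → Letter}

theorem H_bot (b : ℕ) : SnakeHatLE n w (2 * n + 5) b := Or.inl rfl

theorem H_top {b : ℕ} : SnakeHatLE n w (2 * n + 4) b ↔ b = 2 * n + 4 := by
  unfold SnakeHatLE
  omega

theorem H_eq {a b : ℕ} (ha : a < 2 * n + 4) : SnakeHatLE n w a b ↔
    b = 2 * n + 4 ∨ (b < 2 * n + 4 ∧ SnakeLE n w a b) := by
  unfold SnakeHatLE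
  constructor
  · rintro (h | h | h)
    · omega
    · exact Or.inl h
    · exact Or.inr h.2
  · rintro (h | h)
    · exact Or.inr (Or.inl h)
    · exact Or.inr (Or.inr ⟨ha, h⟩)

theorem H_idx {a b : ℕ} (h : SnakeHatLE n w a b) (hb : b ≠ 2 * n + 4) :
    a = 2 * n + 5 ∨ (a < 2 * n + 4 ∧ b ≤ a) := by
  rcases h with h | h | h
  · exact Or.inl h
  · exact absurd h hb
  · exact Or.inr ⟨h.1, snakeLE_le h.2.2⟩

theorem H_refl {a : ℕ} (ha : a < 2 * n + 6) : SnakeHatLE n w a a :=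
  le_refl (α := SnakeHat n w) ⟨a, ha⟩

theorem H_trans {a b c : ℕ} (hb : b < 2 * n + 6)
    (h1 : SnakeHatLE n w a b) (h2 : SnakeHatLE n w b c) : SnakeHatLE n w a c := by
  rcases h1 with h | h | ⟨ha, hb, hab⟩
  · exact Or.inl h
  · subst h
    rw [H_top.1 h2]; exact Or.inr (Or.inl rfl)
  · rcases h2 with h' | h' | ⟨hb', hc, hbc⟩
    · omega
    · exact Or.inr (Or.inl h')
    · exact Or.inr (Or.inr ⟨ha, hc, Relation.ReflTransGen.trans hab hbc⟩)

theorem H_antisymm {a b : ℕ} (ha : a < 2 * n + 6) (hb : b < 2 * n + 6)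
    (h1 : SnakeHatLE n w a b) (h2 : SnakeHatLE n w b a) : a = b :=
  congrArg Fin.val (le_antisymm (α := SnakeHat n w) (a := ⟨a, ha⟩) (b := ⟨b, hb⟩) h1 h2)

theorem H_zero {b : ℕ} : SnakeHatLE n w 0 b ↔ b = 0 ∨ b = 2 * n + 4 := by
  rw [H_eq (by omega), le_zero]; omega

theorem H_one {b : ℕ} : SnakeHatLE n w 1 b ↔ b = 1 ∨ SnakeHatLE n w 0 b := by
  rw [H_eq (by omega), H_eq (by omega), le_one]
  constructor
  · rintro (h | ⟨h, h' | h'⟩) <;> tauto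
  · rintro (h | h | h)
    · exact Or.inr ⟨by omega, Or.inl h⟩
    · exact Or.inl h
    · exact Or.inr ⟨h.1, Or.inr h.2⟩

theorem H_even {m b : ℕ} (hm : m ≤ n) :
    SnakeHatLE n w (2 * m + 2) b ↔ b = 2 * m + 2 ∨ SnakeHatLE n w (snakeSide w m) b := by
  have := side_le w m
  rw [H_eq (by omega), H_eq (by omega), le_even hm]
  constructor
  · rintro (h | ⟨h, h' | h'⟩) <;> tauto
  · rintro (h | h | h)
    · exact Or.inr ⟨by omega, Or.inl h⟩
    · exact Or.inl h
    · exact Or.inr ⟨h.1, Or.inr h.2⟩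

theorem H_odd {m b : ℕ} (hm : m ≤ n) :
    SnakeHatLE n w (2 * m + 3) b ↔
      b = 2 * m + 3 ∨ SnakeHatLE n w (2 * m + 1) b ∨ SnakeHatLE n w (2 * m + 2) b := by
  rw [H_eq (by omega), H_eq (by omega), H_eq (by omega), le_odd hm]
  constructor
  · rintro (h | ⟨h, h' | h' | h'⟩) <;> tauto
  · rintro (h | (h | h) | (h | h))
    · exact Or.inr ⟨by omega, Or.inl h⟩
    · exact Or.inl h
    · exact Or.inr ⟨h.1, Or.inr (Or.inl h.2)⟩
    · exact Or.inl h
    · exact Or.inr ⟨h.1, Or.inr (Or.inr h.2)⟩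

theorem H_low : ∀ {k b : ℕ}, k ≤ n + 1 → b ≤ 2 * k + 1 → SnakeHatLE n w (2 * k + 1) b := by
  intro k
  induction k with
  | zero =>
    intro b _ hb
    rw [show 2 * 0 + 1 = 1 by rfl, H_one, H_zero]; omega
  | succ k ih =>
    intro b hk hb
    rw [show 2 * (k+1) + 1 = 2 * k + 3 by ring, H_odd (by omega)]
    by_cases h1 : b ≤ 2 * k + 1
    · exact Or.inr (Or.inl (ih (by omega) h1))
    · by_cases h2 : b = 2 * k + 2
      · exact Or.inr (Or.inr (h2 ▸ H_refl (by omega)))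
      · left; omega

theorem H_glb {m : ℕ} (hm : m ≤ n) : ∀ {a : ℕ}, a < 2 * n + 6 → SnakeHatLE n w a (2 * m + 1) →
    SnakeHatLE n w a (2 * m + 2) → SnakeHatLE n w a (2 * m + 3) := by
  intro a
  induction a using Nat.strong_induction_on with
  | _ a ih =>
    intro ha h1 h2
    rcases H_idx h1 (by omega) with rfl | ⟨i1, i2⟩
    · exact H_bot _
    rcases H_idx h2 (by omega) with rfl | ⟨_, i3⟩
    · exact H_bot _
    rcases Nat.even_or_odd' a with ⟨k, rfl | rfl⟩
    · obtain ⟨k, rfl⟩ : ∃ c, k = c + 1 := ⟨k - 1, by omega⟩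
      have hs := side_le w k
      rw [show 2 * (k+1) = 2 * k + 2 by ring] at *
      have h1' := (H_even (by omega)).1 h1
      have h2' := (H_even (by omega)).1 h2
      have h1'' : SnakeHatLE n w (snakeSide w k) (2 * m + 1) := by
        rcases h1' with h | h
        · omega
        · exact h
      rcases h2' with h | h
      · rcases H_idx h1'' (by omega) with h | h <;> omega
      · exact (H_even (by omega)).2 (Or.inr (ih _ (by omega) (by omega) h1'' h))
    · exact H_low (by omega) (by omega)

/-- irreducible indices -/
def IrrN (n x : ℕ) : Prop := x < 2 * n + 6 ∧ x ≠ 2 * n + 4 ∧ ∀ m ≤ n, x ≠ 2 * m + 3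

theorem H_side {m : ℕ} (hm : m ≤ n) (q : ℕ) : SnakeHatLE n w (snakeSide w m) q ↔
    SnakeHatLE n w (2 * m + 1) q ∧ SnakeHatLE n w (2 * m + 2) q := by
  have hs := side_le w m
  constructor
  · intro h
    exact ⟨H_trans (by omega) (H_low (by omega) (by omega)) h, (H_even hm).2 (Or.inr h)⟩
  · rintro ⟨h1, h2⟩
    rcases (H_even hm).1 h2 with rfl | h
    · rcases H_idx h1 (by omega) with h | h <;> omega
    · exact h

theorem H_bottom {m : ℕ} (hm : m ≤ n) {q : ℕ} (hq : IrrN n q) : SnakeHatLE n w (2 * m + 3) q ↔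
    SnakeHatLE n w (2 * m + 1) q ∨ SnakeHatLE n w (2 * m + 2) q := by
  rw [H_odd hm]
  have := hq.2.2 m hm
  tauto

theorem H_mid {q : ℕ} (hq : IrrN n q) : ∀ {m : ℕ}, m ≤ n → ∀ {y : ℕ}, y < 2 * m + 2 →
    ¬ SnakeHatLE n w (2 * m + 2) y → (SnakeHatLE n w (2 * m + 3) q ↔
    SnakeHatLE n w (2 * m + 2) q ∨ SnakeHatLE n w y q) := by
  intro m
  induction m with
  | zero =>
    intro hm y hy hn
    rw [H_bottom hm hq]
    have : y ≠ 0 := by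
      rintro rfl
      apply hn
      rw [H_even hm]
      right
      have := side_le w 0
      rw [show snakeSide w 0 = 0 by omega]
      exact H_refl (by omega)
    obtain rfl : y = 2 * 0 + 1 := by omega
    tauto
  | succ m ih =>
    intro hm y hy hn
    rw [H_bottom hm hq]
    by_cases hy1 : y = 2 * (m+1) + 1
    · subst hy1; tauto
    have hlow : SnakeHatLE n w (2 * (m+1) + 1) y := H_low (by omega) (by omega)
    constructor
    swap
    · rintro (h | h)
      · exact Or.inr h
      · exact Or.inl (H_trans (by omega) hlow h)
    rintro (h | h)
    swap
    · exact Or.inl h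
    rw [H_even hm] at hn
    push Not at hn
    rw [H_even hm]
    rw [show 2 * (m+1) + 1 = 2 * m + 3 by ring] at h
    rcases side_cases w (m+1) with ⟨_, _, hs⟩ | ⟨_, hs⟩
    · rw [show 2 * (m+1) - 1 = 2 * m + 1 by omega] at hs
      rw [hs] at hn ⊢
      have : y = 2 * m + 2 := by
        by_contra h'
        exact hn.2 (H_low (by omega) (by omega))
      rw [H_bottom (by omega) hq] at h
      subst this
      tauto
    · rw [show 2 * (m+1) = 2 * m + 2 by omega] at hs
      rw [hs] at hn ⊢
      have : y ≠ 2 * m + 2 := by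
        rintro rfl
        exact hn.2 (H_refl (by omega))
      have := (ih (by omega) (y := y) (by omega) hn.2).1 h
      tauto

theorem H_union {x y : ℕ} (hx : x < 2 * n + 6) (hy : y < 2 * n + 6) : ∃ z < 2 * n + 6,
    ∀ q, IrrN n q → (SnakeHatLE n w z q ↔ SnakeHatLE n w x q ∨ SnakeHatLE n w y q) := by
  wlog hxy : y ≤ x generalizing x y
  · obtain ⟨z, hz, h⟩ := this hy hx (by omega)
    exact ⟨z, hz, fun q hq => by rw [h q hq]; tauto⟩
  by_cases h1 : SnakeHatLE n w x y
  · exact ⟨x, hx, fun q hq => ⟨Or.inl, fun h => h.elim id (fun h => H_trans hy h1 h)⟩⟩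
  by_cases h2 : SnakeHatLE n w y x
  · exact ⟨y, hy, fun q hq => ⟨Or.inr, fun h => h.elim (fun h => H_trans hx h2 h) id⟩⟩
  have hx5 : x ≠ 2 * n + 5 := by rintro rfl; exact h1 (H_bot _)
  have hx4 : x ≠ 2 * n + 4 := by rintro rfl; exact h2 (Or.inr (Or.inl rfl))
  have hne : x ≠ y := by rintro rfl; exact h1 (H_refl hx)
  rcases Nat.even_or_odd' x with ⟨k, rfl | rfl⟩
  · obtain ⟨k, rfl⟩ : ∃ c, k = c + 1 := ⟨k - 1, by omega⟩
    exact ⟨2 * k + 3, by omega, fun q hq => H_mid hq (by omega) (by omega) h1⟩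
  · exact absurd (H_low (by omega) (by omega)) h1

theorem H_sep {y : ℕ} (hy : y < 2 * n + 6) : ∀ {x : ℕ}, x < 2 * n + 6 →
    (∀ q, IrrN n q → SnakeHatLE n w x q → SnakeHatLE n w y q) → SnakeHatLE n w y x := by
  intro x
  induction x using Nat.strong_induction_on with
  | _ x ih =>
    intro hx h
    by_cases hq : IrrN n x
    · exact h x hq (H_refl hx)
    by_cases h4 : x = 2 * n + 4
    · exact Or.inr (Or.inl h4)
    have : ∃ m ≤ n, x = 2 * m + 3 := by
      by_contra hc
      push Not at hc
      exact hq ⟨hx, h4, hc⟩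
    obtain ⟨m, hm, rfl⟩ := this
    apply H_glb hm hy
    · exact ih _ (by omega) (by omega) (fun q hq h' => h q hq ((H_bottom hm hq).2 (Or.inl h')))
    · exact ih _ (by omega) (by omega) (fun q hq h' => h q hq ((H_bottom hm hq).2 (Or.inr h')))

theorem irr_of_cover {α : Type*} [PartialOrder α] {x u : α} (h1 : ∀ y, x ≤ y → y = x ∨ u ≤ y)
    (h2 : ¬ u ≤ x) : MeetIrred x := by
  refine ⟨fun h => h2 (h u), ?_⟩
  intro y z h
  by_contra hc
  push Not at hc
  have hy : x ≤ y := h.1 (by simp)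
  have hz : x ≤ z := h.1 (by simp)
  apply h2
  apply h.2
  rintro a (rfl | rfl)
  · exact (h1 _ hy).resolve_left (fun e => hc.1 e.symm)
  · exact (h1 _ hz).resolve_left (fun e => hc.2 e.symm)

/-- constructor -/
def mkH (n : ℕ) (w : ℕ → Letter) (x : ℕ) (hx : x < 2 * n + 6) : SnakeHat n w := ⟨x, hx⟩

theorem irr_iff (x : SnakeHat n w) : MeetIrred x ↔ IrrN n x.1 := by
  constructor
  · rintro ⟨h1, h2⟩
    refine ⟨x.2, ?_, ?_⟩
    · intro h
      exact h1 (fun b => Or.inr (Or.inl h))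
    · intro m hm h
      have := h2 (mkH n w (2 * m + 1) (by omega)) (mkH n w (2 * m + 2) (by omega)) ?_
      · rcases this with e | e <;> 
        · have := congrArg Fin.val e
          simp only [mkH] at this; omega
      · constructor
        · rintro a (rfl | rfl)
          · show SnakeHatLE n w x.1 (2 * m + 1)
            rw [h, H_odd hm]; exact Or.inr (Or.inl (H_refl (by omega)))
          · show SnakeHatLE n w x.1 (2 * m + 2)
            rw [h, H_odd hm]; exact Or.inr (Or.inr (H_refl (by omega)))
        · intro a ha
          have h1 : a ≤ mkH n w (2 * m + 1) (by omega) := ha (Or.inl rfl)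
          have h2 : a ≤ mkH n w (2 * m + 2) (by omega) := ha (Or.inr rfl)
          show SnakeHatLE n w a.1 x.1
          rw [h]
          exact H_glb hm a.2 h1 h2
  · rintro ⟨hx, h4, h3⟩
    have key : ∀ u (hu : u < 2 * n + 6), (∀ y < 2 * n + 6, SnakeHatLE n w x.1 y → y = x.1 ∨ SnakeHatLE n w u y) →
        ¬ SnakeHatLE n w u x.1 → MeetIrred x := by
      intro u hu a1 a2
      refine irr_of_cover (u := mkH n w u hu) ?_ a2
      intro y hy
      rcases a1 y.1 y.2 hy with h | h
      · exact Or.inl (Fin.ext h)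
      · exact Or.inr h
    generalize x.1 = x at key hx h4 h3
    by_cases h5 : x = 2 * n + 5
    · apply key (2 * (n+1) + 1) (by omega)
      · intro y hy _
        by_cases h : y = 2 * n + 5
        · omega
        · by_cases h : y = 2 * n + 4
          · exact Or.inr (Or.inr (Or.inl h))
          · exact Or.inr (H_low (by omega) (by omega))
      · intro h
        rcases H_idx h (by omega) with h | h <;> omega
    rcases Nat.eq_zero_or_pos x with rfl | hp
    · apply key (2 * n + 4) (by omega)
      · intro y hy h
        rw [H_top]; exact H_zero.1 h
      · rw [H_top]; omega
    by_cases hx1 : x = 1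
    · subst hx1
      apply key 0 (by omega)
      · intro y hy h
        exact H_one.1 h
      · rw [H_zero]; omega
    rcases Nat.even_or_odd' x with ⟨k, rfl | rfl⟩
    · obtain ⟨k, rfl⟩ : ∃ c, k = c + 1 := ⟨k - 1, by omega⟩
      have hs := side_le w k
      apply key (snakeSide w k) (by omega)
      · intro y hy h
        exact (H_even (by omega)).1 h
      · intro h
        rcases H_idx h (by omega) with h | h <;> omega
    · exact absurd (show 2 * k + 1 = 2 * (k-1) + 3 by omega) (h3 _ (by omega))

end hat

theorem aff_dep {ι V : Type*} [Fintype ι] [AddCommGroup V] [Module ℝ V] (g : ι → V)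
    (inj : Function.Injective g) (X : Set ι) :
    AffineIndependent ℝ (Subtype.val : g '' X → V) ↔
      ∀ f : ι → ℝ, (∀ x, x ∉ X → f x = 0) → ∑ x, f x = 0 → ∑ x, f x • g x = 0 → ∀ x, f x = 0 := by
  classical
  have sub : ∀ {M : Type _} [AddCommMonoid M] (F : ι → M), (∀ x, x ∉ X → F x = 0) →
      ∑ x : X, F x = ∑ x, F x := by
    intro M _ F hF
    rw [← Finset.sum_subset (Finset.subset_univ X.toFinset)]
    · exact (Finset.sum_subtype _ (fun x => by simp) F).symm
    · intro x _ hx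
      exact hF x (by simpa using hx)
  have sub' : ∀ {M : Type _} [AddCommMonoid M] (F : ι → M), (∀ x, x ∉ X → F x = 0) →
      ∑ x : X, F x = ∑ x, F x := by
    intro M _ F hF
    rw [← Finset.sum_subset (Finset.subset_univ X.toFinset)]
    · exact (Finset.sum_subtype _ (fun x => by simp) F).symm
    · intro x _ hx
      exact hF x (by simpa using hx)
  rw [← affineIndependent_equiv (Equiv.Set.image g X inj), affineIndependent_iff]
  constructor
  · intro h f hf h1 h2 x
    by_cases hx : x ∈ X
    · refine h Finset.univ (fun x => f x.1) ?_ ?_ ⟨x, hx⟩ (Finset.mem_univ _)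
      · rw [sub f hf, h1]
      · have := sub' (fun x => f x • g x) (fun x hx => by simp [hf x hx])
        rw [h2] at this
        exact this
    · exact hf x hx
  · intro h s v h1 h2 e he
    let f : ι → ℝ := fun x => if hx : x ∈ X then (if (⟨x, hx⟩ : X) ∈ s then v ⟨x, hx⟩ else 0) else 0
    have hf : ∀ x, x ∉ X → f x = 0 := fun x hx => by simp [f, hx]
    have hfx : ∀ x : X, f x.1 = if x ∈ s then v x else 0 := fun x => by simp [f]
    have := h f hf ?_ ?_ e.1
    · simpa [hfx, he] using this
    · rw [← sub f hf]
      simp only [hfx]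
      rw [Finset.sum_ite_mem, Finset.univ_inter, h1]
    · rw [← sub' (fun x => f x • g x) (fun x hx => by simp [hf x hx])]
      simp only [hfx, ite_smul, zero_smul]
      rw [Finset.sum_ite_mem, Finset.univ_inter]
      exact h2

section dd
variable {n : ℕ} {w : ℕ → Letter}

open Classical in
noncomputable def Hv (n : ℕ) (w : ℕ → Letter) (x q : ℕ) : ℝ := if SnakeHatLE n w x q then 1 else 0

def Dep (n : ℕ) (w : ℕ → Letter) (f : ℕ → ℝ) : Prop :=
  ∑ x ∈ Finset.range (2 * n + 6), f x = 0 ∧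
    ∀ q, IrrN n q → ∑ x ∈ Finset.range (2 * n + 6), f x * Hv n w x q = 0

theorem sqc_sum {m : ℕ} (hm : m ≤ n) (φ : ℕ → ℝ) :
    ∑ x ∈ Finset.range (2 * n + 6), sqc w m x * φ x =
      φ (snakeSide w m) - φ (2 * m + 1) - φ (2 * m + 2) + φ (2 * m + 3) := by
  have := side_le w m
  simp only [sqc, add_mul, sub_mul, Finset.sum_add_distrib, Finset.sum_sub_distrib, ite_mul,
    one_mul, zero_mul, Finset.sum_ite_eq', Finset.mem_range]
  rw [if_pos (by omega), if_pos (by omega), if_pos (by omega), if_pos (by omega)]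

theorem sqv_sum (c φ : ℕ → ℝ)
    (h : ∀ m ≤ n, φ (snakeSide w m) - φ (2 * m + 1) - φ (2 * m + 2) + φ (2 * m + 3) = 0) :
    ∑ x ∈ Finset.range (2 * n + 6), sqv n w c x * φ x = 0 := by
  simp only [sqv, Finset.sum_mul]
  rw [Finset.sum_comm]
  apply Finset.sum_eq_zero
  intro m hm
  have hm : m ≤ n := by simpa [Nat.lt_succ_iff] using hm
  simp only [mul_assoc]
  rw [← Finset.mul_sum, sqc_sum hm, h m hm, mul_zero]

theorem dep_sqv (c : ℕ → ℝ) : Dep n w (sqv n w c) := by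
  constructor
  · have := sqv_sum (n := n) (w := w) c (fun _ => 1) (by intros; norm_num)
    simpa using this
  · intro q hq
    apply sqv_sum
    intro m hm
    have a1 := H_side (w := w) hm q
    have a2 := H_bottom (w := w) hm hq
    unfold Hv
    by_cases h1 : SnakeHatLE n w (2 * m + 1) q <;> by_cases h2 : SnakeHatLE n w (2 * m + 2) q <;>
      norm_num [h1, h2, a1, a2]

theorem sqv_top (c : ℕ → ℝ) {x : ℕ} (hx : 2 * n + 4 ≤ x) : sqv n w c x = 0 := by
  unfold sqv
  apply Finset.sum_eq_zero
  intro m hm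
  have hm : m ≤ n := by simpa [Nat.lt_succ_iff] using hm
  have := side_le w m
  unfold sqc
  rw [if_neg (by omega), if_neg (by omega), if_neg (by omega), if_neg (by omega)]
  simp

theorem sqv_congr {c d : ℕ → ℝ} (h : ∀ k ≤ n, c k = d k) (x : ℕ) : sqv n w c x = sqv n w d x := by
  unfold sqv
  apply Finset.sum_congr rfl
  intro m hm
  rw [h m (by simpa [Nat.lt_succ_iff] using hm)]

theorem sqv_smul (t : ℝ) (c : ℕ → ℝ) (x : ℕ) :
    sqv n w (fun k => t * c k) x = t * sqv n w c x := by
  unfold sqv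
  rw [Finset.mul_sum]
  apply Finset.sum_congr rfl
  intros; ring

theorem sqv_add (c d : ℕ → ℝ) (x : ℕ) :
    sqv n w (fun k => c k + d k) x = sqv n w c x + sqv n w d x := by
  unfold sqv
  rw [← Finset.sum_add_distrib]
  apply Finset.sum_congr rfl
  intros; ring

theorem sqv_single {m : ℕ} (hm : m ≤ n) (t : ℝ) (x : ℕ) :
    sqv n w (fun k => if k = m then t else 0) x = t * sqc w m x := by
  unfold sqv
  simp only [ite_mul, zero_mul, Finset.sum_ite_eq', Finset.mem_range]
  rw [if_pos (by omega)]

theorem elim (f : ℕ → ℝ) : ∀ k ≤ n + 1, ∃ c : ℕ → ℝ, ∀ m ≤ n, n + 1 ≤ m + k →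
    f (2 * m + 3) = sqv n w c (2 * m + 3) := by
  intro k
  induction k with
  | zero => intro _; exact ⟨0, fun m h1 h2 => by omega⟩
  | succ k ih =>
    intro hk
    obtain ⟨c, hc⟩ := ih (by omega)
    obtain ⟨m0, rfl⟩ : ∃ m0, n = m0 + k := ⟨n - k, by omega⟩
    refine ⟨fun j => c j + if j = m0 then f (2 * m0 + 3) - sqv (m0 + k) w c (2 * m0 + 3) else 0, ?_⟩
    intro m h1 h2
    rw [sqv_add, sqv_single (by omega)]
    have hs := side_le w m0
    unfold sqc
    rw [if_neg (by omega : ¬ 2 * m + 3 = snakeSide w m0), if_neg (by omega : ¬ 2 * m + 3 = 2 * m0 + 1), if_neg (by omega : ¬ 2 * m + 3 = 2 * m0 + 2)]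
    by_cases h : m = m0
    · subst h; simp
    · rw [if_neg (by omega), hc m h1 (by omega)]; simp

theorem dep_sub {f g : ℕ → ℝ} (hf : Dep n w f) (hg : Dep n w g) : Dep n w (fun x => f x - g x) := by
  constructor
  · simp only [Finset.sum_sub_distrib, hf.1, hg.1, sub_zero]
  · intro q hq
    simp only [sub_mul, Finset.sum_sub_distrib, hf.2 q hq, hg.2 q hq, sub_zero]

theorem dep_zero {h : ℕ → ℝ} (hd : Dep n w h) (ho : ∀ m ≤ n, h (2 * m + 3) = 0) :
    ∀ x < 2 * n + 6, h x = 0 := by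
  have h5 : h (2 * n + 5) = 0 := by
    have := hd.2 (2 * n + 5) ⟨by omega, by omega, by intros; omega⟩
    rw [Finset.sum_eq_single (2 * n + 5)] at this
    · simpa [Hv, H_bot] using this
    · intro b hb hb'
      simp only [Finset.mem_range] at hb
      have : ¬ SnakeHatLE n w b (2 * n + 5) := by
        intro h
        rcases H_idx h (by omega) with h | h <;> omega
      simp [Hv, this]
    · simp
  have hl : ∀ k x, x + k = 2 * n + 3 → h x = 0 := by
    intro k
    induction k using Nat.strong_induction_on with
    | _ k ih =>
    intro x hx
    by_cases hi : IrrN n x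
    · have := hd.2 x hi
      rw [Finset.sum_eq_single x] at this
      · simpa [Hv, H_refl (show x < 2 * n + 6 by omega)] using this
      · intro b hb hb'
        simp only [Finset.mem_range] at hb
        by_cases hle : SnakeHatLE n w b x
        · rcases H_idx hle (by omega) with h | h
          · rw [h, h5, zero_mul]
          · rw [ih (2 * n + 3 - b) (by omega) b (by omega), zero_mul]
        · simp [Hv, hle]
      · intro h; simp at h; omega
    · unfold IrrN at hi
      push Not at hi
      obtain ⟨m, hm, e⟩ := hi (by omega) (by omega)
      rw [e, ho m hm]
  have h4 : h (2 * n + 4) = 0 := by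
    have := hd.1
    rwa [Finset.sum_eq_single (2 * n + 4)] at this
    · intro b hb hb'
      simp only [Finset.mem_range] at hb
      by_cases e : b = 2 * n + 5
      · rw [e, h5]
      · exact hl (2 * n + 3 - b) b (by omega)
    · simp
  intro x hx
  by_cases e : x = 2 * n + 5
  · rw [e, h5]
  by_cases e : x = 2 * n + 4
  · rw [e, h4]
  exact hl (2 * n + 3 - x) x (by omega)

theorem dep_conv {f : ℕ → ℝ} (hf : Dep n w f) : ∃ c, ∀ x < 2 * n + 6, f x = sqv n w c x := by
  obtain ⟨c, hc⟩ := elim (n := n) (w := w) f (n + 1) le_rfl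
  refine ⟨c, fun x hx => ?_⟩
  have := dep_zero (dep_sub hf (dep_sqv c)) (fun m hm => by rw [hc m hm (by omega), sub_self]) x hx
  linarith

noncomputable def gv (n : ℕ) (w : ℕ → Letter) (x : Fin (2 * n + 6)) : SnakeQ n w → ℝ :=
  fun q => Hv n w x.1 q.1.1

theorem gv_inj : Function.Injective (gv n w) := by
  have key : ∀ x y : Fin (2 * n + 6), gv n w x = gv n w y → SnakeHatLE n w y.1 x.1 := by
    intro x y h
    apply H_sep y.2 x.2
    intro q hq hx
    have := congrFun h ⟨mkH n w q hq.1, (irr_iff _).2 hq⟩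
    by_contra hy
    have e : Hv n w x.1 q = Hv n w y.1 q := this
    simp [Hv, hx, hy] at e
  intro x y h
  exact Fin.ext (H_antisymm x.2 y.2 (key y x h.symm) (key x y h))

theorem range_gv : OPVertexSet (SnakeQ n w) = Set.range (gv n w) := by
  classical
  ext v
  constructor
  · rintro ⟨A, hA, rfl⟩
    haveI : Finite (SnakeHat n w) := inferInstanceAs (Finite (Fin _))
    have key : ∀ B : Set (SnakeQ n w), B.Finite → ∃ z < 2 * n + 6, ∀ q, IrrN n q →
        (SnakeHatLE n w z q ↔ ∃ a ∈ B, SnakeHatLE n w a.1.1 q) := by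
      intro B hB
      induction B, hB using Set.Finite.induction_on with
      | empty =>
        refine ⟨2 * n + 4, by omega, fun q hq => ?_⟩
        rw [H_top]
        have := hq.2.1
        simp [this]
      | @insert a s _ _ ih =>
        obtain ⟨z, hz, h⟩ := ih
        obtain ⟨z', hz', h'⟩ := H_union (w := w) a.1.2 hz
        refine ⟨z', hz', fun q hq => ?_⟩
        rw [h' q hq, h q hq]
        constructor
        · rintro (h | ⟨b, hb, h⟩)
          · exact ⟨a, Or.inl rfl, h⟩
          · exact ⟨b, Or.inr hb, h⟩
        · rintro ⟨b, rfl | hb, h⟩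
          · exact Or.inl h
          · exact Or.inr ⟨b, hb, h⟩
    obtain ⟨z, hz, h⟩ := key A (Set.toFinite A)
    refine ⟨⟨z, hz⟩, ?_⟩
    funext q
    have hq := h q.1.1 ((irr_iff _).1 q.2)
    have e : SnakeHatLE n w z q.1.1 ↔ q ∈ A := by
      rw [hq]
      constructor
      · rintro ⟨a, ha, h⟩
        exact hA a ha q h
      · intro h
        exact ⟨q, h, H_refl q.1.2⟩
    simp [gv, Hv, e, Set.indicator]
  · rintro ⟨x, rfl⟩
    refine ⟨{q | SnakeHatLE n w x.1 q.1.1}, ?_, ?_⟩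
    · intro a ha b hab
      exact H_trans a.1.2 ha hab
    · funext q
      simp [gv, Hv, Set.indicator]

theorem dep_iff (f : ℕ → ℝ) : Dep n w f ↔ ∑ x : Fin (2 * n + 6), f x.1 = 0 ∧
    ∑ x : Fin (2 * n + 6), f x.1 • gv n w x = 0 := by
  unfold Dep
  rw [Finset.sum_range]
  apply and_congr Iff.rfl
  constructor
  · intro h
    funext q
    have := h q.1.1 ((irr_iff _).1 q.2)
    rw [Finset.sum_range] at this
    simpa [gv] using this
  · intro h q hq
    have := congrFun h ⟨mkH n w q hq.1, (irr_iff _).2 hq⟩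
    rw [Finset.sum_range]
    simpa [gv, mkH] using this

theorem indep_iff (X : Set (Fin (2 * n + 6))) :
    AffineIndependent ℝ (Subtype.val : gv n w '' X → (SnakeQ n w → ℝ)) ↔
      ∀ c : ℕ → ℝ, (∀ x, x ∉ X → sqv n w c x.1 = 0) → ∀ x < 2 * n + 6, sqv n w c x = 0 := by
  rw [aff_dep _ gv_inj]
  constructor
  · intro h c hc x hx
    obtain ⟨h1, h2⟩ := (dep_iff (n := n) (w := w) _).1 (dep_sqv c)
    exact h (fun x => sqv n w c x.1) hc h1 h2 ⟨x, hx⟩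
  · intro h f hf h1 h2
    let F : ℕ → ℝ := fun x => if hx : x < 2 * n + 6 then f ⟨x, hx⟩ else 0
    have hF : ∀ x : Fin (2 * n + 6), F x.1 = f x := fun x => by simp [F]
    have hd : Dep n w F := by
      rw [dep_iff]
      simp only [hF]
      exact ⟨h1, h2⟩
    obtain ⟨c, hc⟩ := dep_conv hd
    intro x
    rw [← hF, hc _ x.2]
    apply h c _ _ x.2
    intro y hy
    rw [← hc _ y.2, hF, hf y hy]

def Gam (n : ℕ) (w : ℕ → Letter) (S : Set ℕ) : Set (Fin (2 * n + 6)) :=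
  {x | sqv n w (sgnV S) x.1 ≠ 0}

theorem coef_zero (hw : InV n w) {c : ℕ → ℝ} (h : ∀ x < 2 * n + 6, sqv n w c x = 0) :
    ∀ k ≤ n, c k = 0 := by
  have e : ECond n w (fun _ => 0) c := E_of_supp hw (fun x hx _ => h x (by omega))
  intro k
  induction k with
  | zero => intro _; exact e.1 rfl
  | succ k ih =>
    intro hk
    rw [← e.2.2.1 k (by omega) rfl]
    exact ih (by omega)

theorem gam_dep (hw : InV n w) {S : Set ℕ} (hS : GapC n w S) :
    ¬ AffineIndependent ℝ (Subtype.val : gv n w '' Gam n w S → (SnakeQ n w → ℝ)) := by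
  rw [indep_iff]
  intro h
  obtain ⟨k, hk⟩ := hS.1
  have := coef_zero hw (h (sgnV S) (fun x hx => by simpa [Gam] using hx)) k (hS.2.1 k hk)
  exact sgnV_zero.1 this hk

theorem gam_min (hw : InV n w) {S : Set ℕ} (hS : GapC n w S) {c : ℕ → ℝ}
    (h : ∀ x, x ∉ Gam n w S → sqv n w c x.1 = 0) : ∃ t : ℝ, ∀ k ≤ n, c k = t * sgnV S k := by
  apply lemB hS
  apply E_of_supp hw
  intro x hx h0
  exact h ⟨x, by omega⟩ (by simpa [Gam] using h0)

theorem gam_circuit (hw : InV n w) {S : Set ℕ} (hS : GapC n w S) :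
    IsAffCircuit (gv n w '' Gam n w S) := by
  refine ⟨gam_dep hw hS, ?_⟩
  intro Y hY
  obtain ⟨X, hX, rfl⟩ := Set.subset_image_iff.1 hY.1
  rw [indep_iff]
  intro c hc
  obtain ⟨t, ht⟩ := gam_min hw hS (c := c) (fun x hx => hc x (fun h => hx (hX h)))
  have e : ∀ x, sqv n w c x = t * sqv n w (sgnV S) x := fun x => by
    rw [← sqv_smul]; exact sqv_congr ht x
  intro x hx
  by_cases h0 : t = 0
  · rw [e, h0, zero_mul]
  · exfalso
    apply hY.2
    apply Set.image_mono
    intro y hy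
    by_contra hyX
    have := hc y hyX
    rw [e] at this
    rcases mul_eq_zero.1 this with h | h
    · exact h0 h
    · exact hy h

theorem main_bij (hw : InV n w) : ∃ Γ : GSets n w →
        {Z : Set (SnakeQ n w → ℝ) // Z ⊆ OPVertexSet (SnakeQ n w) ∧ IsAffCircuit Z},
      Function.Bijective Γ := by
  refine ⟨fun S => ⟨gv n w '' Gam n w S.1, ?_, gam_circuit hw (gap_of_G S.2)⟩, ?_, ?_⟩
  · rw [range_gv]; exact Set.image_subset_range _ _
  · rintro ⟨S, hS⟩ ⟨T, hT⟩ h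
    have h1 : gv n w '' Gam n w S = gv n w '' Gam n w T := congrArg Subtype.val h
    have h2 : Gam n w S = Gam n w T := gv_inj.image_injective h1
    have key : ∀ S T : Set ℕ, GapC n w S → GapC n w T → Gam n w S = Gam n w T → T ⊆ S := by
      intro S T hS hT h k hk
      obtain ⟨t, ht⟩ := gam_min hw hS (c := sgnV T) (fun x hx => by
        rw [h] at hx; simpa [Gam] using hx)
      by_contra hkS
      have := ht k (hT.2.1 k hk)
      rw [sgnV_zero.2 hkS, mul_zero] at this
      exact sgnV_zero.1 this hk
    apply Subtype.ext
    exact Set.Subset.antisymm (key T S (gap_of_G hT) (gap_of_G hS) h2.symm)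
      (key S T (gap_of_G hS) (gap_of_G hT) h2)
  · rintro ⟨Z, hZ, hc1, hc2⟩
    rw [range_gv] at hZ
    obtain ⟨X, rfl⟩ := Set.subset_range_iff_exists_image_eq.1 hZ
    have hd := hc1
    rw [indep_iff] at hd
    push Not at hd
    obtain ⟨c, hc, x, hx, hne⟩ := hd
    have hk : ∃ k, k ≤ n ∧ c k ≠ 0 := by
      by_contra h
      push Not at h
      apply hne
      rw [sqv_congr (d := fun _ => 0) h]
      simp [sqv]
    obtain ⟨S, hS, hE⟩ := lemA hw c hk
    have hsub : Gam n w S ⊆ X := by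
      intro y hy
      by_contra hyX
      apply hy
      by_cases h4 : y.1 < 2 * n + 4
      · exact supp_of_E hE y.1 h4 (hc y hyX)
      · exact sqv_top _ (by omega)
    refine ⟨⟨S, G_of_gap hS⟩, ?_⟩
    apply Subtype.ext
    show gv n w '' Gam n w S = gv n w '' X
    by_contra hn
    exact gam_dep hw hS (hc2 _ (lt_of_le_of_ne (Set.image_mono hsub) hn))

end dd

theorem stmt11 (n : ℕ) (w : ℕ → Letter) (hw : InV n w) :
    (∃ Γ : GSets n w →
        {Z : Set (SnakeQ n w → ℝ) // Z ⊆ OPVertexSet (SnakeQ n w) ∧ IsAffCircuit Z},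
      Function.Bijective Γ) ∧
    Nat.card {Z : Set (SnakeQ n w → ℝ) //
        Z ⊆ OPVertexSet (SnakeQ n w) ∧ IsAffCircuit Z} = (GSets n w).ncard := by
  refine ⟨main_bij hw, ?_⟩
  obtain ⟨Γ, hΓ⟩ := main_bij hw
  rw [← Nat.card_congr (Equiv.ofBijective Γ hΓ)]
  exact Nat.card_coe_set_eq _
end

section
/- Let w ∈ 𝒱 be a generalized snake word of length n, and let t be the number of indices i with 2 ≤ i ≤ n and w_{i−1} ≠ w_i (for w ∈ 𝒱 these are exactly the turns of w, i.e., occurrences of LLR or RRL, with the convention that the empty letter w_0 = ε matches w_1). Then every circuit Z of the vertex set V(Q_w) of the order polytope O(Q_w) satisfies 4 ≤ |Z| ≤ 4 + 2t; moreover there exists a circuit with exactly 4 elements and there exists a circuit with exactly 4 + 2t elements. -/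
namespace Snake13

variable {n : ℕ} {w : ℕ → Letter}

theorem side_zero : snakeSide w 0 = 0 := by simp [snakeSide]

theorem side_le (m : ℕ) : snakeSide w m ≤ 2 * m := by
  unfold snakeSide; split <;> omega

theorem side_ge (m : ℕ) : 2 * m ≤ snakeSide w m + 1 := by
  unfold snakeSide; split <;> omega

theorem cov_odd1 {m : ℕ} (h : m ≤ n) : SnakeCov n w (2 * m + 3) (2 * m + 1) := by
  rcases Nat.eq_zero_or_pos m with rfl | h'
  · exact SnakeCov.cov31
  · exact SnakeCov.covOdd m h' h

theorem cov_odd2 {m : ℕ} (h : m ≤ n) : SnakeCov n w (2 * m + 3) (2 * m + 2) := by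
  rcases Nat.eq_zero_or_pos m with rfl | h'
  · exact SnakeCov.cov32
  · exact SnakeCov.covBot m h' h

theorem cov_even {m : ℕ} (h : m ≤ n) : SnakeCov n w (2 * m + 2) (snakeSide w m) := by
  rcases Nat.eq_zero_or_pos m with rfl | h'
  · rw [side_zero]; exact SnakeCov.cov20
  · exact SnakeCov.covSide m h' h

theorem cov_inv {a b : ℕ} (h : SnakeCov n w a b) : (a = 1 ∧ b = 0) ∨ ∃ m, m ≤ n ∧
    ((a = 2 * m + 3 ∧ (b = 2 * m + 1 ∨ b = 2 * m + 2)) ∨ (a = 2 * m + 2 ∧ b = snakeSide w m)) := by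
  cases h
  case cov10 => exact Or.inl ⟨rfl, rfl⟩
  case cov20 => exact Or.inr ⟨0, by omega, Or.inr ⟨by omega, side_zero.symm⟩⟩
  case cov31 => exact Or.inr ⟨0, by omega, Or.inl ⟨by omega, by omega⟩⟩
  case cov32 => exact Or.inr ⟨0, by omega, Or.inl ⟨by omega, by omega⟩⟩
  case covOdd m h1 h2 => exact Or.inr ⟨m, h2, Or.inl ⟨by omega, by omega⟩⟩
  case covBot m h1 h2 => exact Or.inr ⟨m, h2, Or.inl ⟨by omega, by omega⟩⟩
  case covSide m h1 h2 => exact Or.inr ⟨m, h2, Or.inr ⟨by omega, rfl⟩⟩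

theorem le_even {m b : ℕ} (h : SnakeLE n w (2 * m + 2) b) :
    b = 2 * m + 2 ∨ SnakeLE n w (snakeSide w m) b := by
  rcases Relation.ReflTransGen.cases_head h with h | ⟨c, hc, h⟩
  · exact Or.inl h.symm
  · rcases cov_inv hc with ⟨h1, _⟩ | ⟨k, _, ⟨h1, _⟩ | ⟨h1, h2⟩⟩
    · omega
    · omega
    · obtain rfl : k = m := by omega
      subst h2; exact Or.inr h

theorem le_odd {m b : ℕ} (h : SnakeLE n w (2 * m + 3) b) :
    b = 2 * m + 3 ∨ SnakeLE n w (2 * m + 1) b ∨ SnakeLE n w (2 * m + 2) b := by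
  rcases Relation.ReflTransGen.cases_head h with h | ⟨c, hc, h⟩
  · exact Or.inl h.symm
  · rcases cov_inv hc with ⟨h1, _⟩ | ⟨k, _, ⟨h1, h2 | h2⟩ | ⟨h1, h2⟩⟩
    · omega
    · obtain rfl : k = m := by omega
      subst h2; exact Or.inr (Or.inl h)
    · obtain rfl : k = m := by omega
      subst h2; exact Or.inr (Or.inr h)
    · omega

theorem odd_le : ∀ (m b : ℕ), m ≤ n + 1 → b ≤ 2 * m + 1 → SnakeLE n w (2 * m + 1) b := by
  intro m
  induction m with
  | zero =>
    intro b _ hb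
    rcases (by omega : b = 0 ∨ b = 1) with rfl | rfl
    · exact Relation.ReflTransGen.single SnakeCov.cov10
    · exact Relation.ReflTransGen.refl
  | succ m ih =>
    intro b hm hb
    have e : 2 * (m + 1) + 1 = 2 * m + 3 := by ring
    rw [e] at hb ⊢
    rcases (by omega : b = 2 * m + 3 ∨ b = 2 * m + 2 ∨ b ≤ 2 * m + 1) with rfl | rfl | hb
    · exact Relation.ReflTransGen.refl
    · exact Relation.ReflTransGen.single (cov_odd2 (by omega))
    · exact Relation.ReflTransGen.head (cov_odd1 (by omega)) (ih b (by omega) hb)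

theorem meet_aux {m : ℕ} : ∀ c, c < 2 * n + 4 → SnakeLE n w c (2 * m + 1) →
    SnakeLE n w c (2 * m + 2) → SnakeLE n w c (2 * m + 3) := by
  intro c
  induction c using Nat.strong_induction_on with
  | _ c ih =>
    intro hc h1 h2
    have g1 := snakeLE_le h1
    have g2 := snakeLE_le h2
    rcases Nat.even_or_odd' c with ⟨k, hk | hk⟩
    · obtain ⟨j, rfl⟩ : ∃ j, k = j + 1 := ⟨k - 1, by omega⟩
      have e : c = 2 * j + 2 := by omega
      subst e
      have s1 := side_le (w := w) j
      rcases le_even h1 with h1 | h1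
      · omega
      rcases le_even h2 with h2 | h2
      · have := snakeLE_le h1
        omega
      exact Relation.ReflTransGen.head (cov_even (by omega)) (ih _ (by omega) (by omega) h1 h2)
    · subst hk
      exact odd_le k _ (by omega) (by omega)

/-- every even element is above-related to all earlier non-odd elements but one -/
theorem even_le : ∀ m, m ≤ n → ∃ q0, q0 < 2 * m + 2 ∧ ∀ b, b < 2 * m + 2 → (b % 2 = 0 ∨ b = 1) →
    b ≠ q0 → SnakeLE n w (2 * m + 2) b := by
  intro m
  induction m with
  | zero =>
    intro _
    refine ⟨1, by omega, fun b hb hb' hb1 => ?_⟩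
    obtain rfl : b = 0 := by omega
    exact Relation.ReflTransGen.single SnakeCov.cov20
  | succ m ih =>
    intro hm
    have hc := cov_even (w := w) hm
    have s1 := side_le (w := w) (m + 1)
    have s2 := side_ge (w := w) (m + 1)
    rcases (by omega : snakeSide w (m + 1) = 2 * m + 2 ∨ snakeSide w (m + 1) = 2 * m + 1)
      with hs | hs <;> rw [hs] at hc
    · obtain ⟨q0, hq, h⟩ := ih (by omega)
      refine ⟨q0, by omega, fun b hb hb' hb1 => Relation.ReflTransGen.head hc ?_⟩
      by_cases hb2 : b < 2 * m + 2
      · exact h b hb2 hb' hb1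
      · obtain rfl : b = 2 * m + 2 := by omega
        exact Relation.ReflTransGen.refl
    · exact ⟨2 * m + 2, by omega, fun b hb hb' hb1 => Relation.ReflTransGen.head hc
        (odd_le m b (by omega) (by omega))⟩

/-! hat level -/

theorem hat_iff {a u : ℕ} (ha : a < 2 * n + 4) (hu : u < 2 * n + 4) :
    SnakeHatLE n w a u ↔ SnakeLE n w a u := by
  unfold SnakeHatLE
  constructor
  · rintro (h | h | ⟨_, _, h⟩)
    · omega
    · omega
    · exact h
  · intro h; exact Or.inr (Or.inr ⟨ha, hu, h⟩)

theorem hat_top (a : ℕ) : SnakeHatLE n w a (2 * n + 4) := Or.inr (Or.inl rfl)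

theorem hat_bot (a : ℕ) : SnakeHatLE n w (2 * n + 5) a := Or.inl rfl

theorem hat_not_bot {a : ℕ} (ha : a < 2 * n + 5) : ¬ SnakeHatLE n w a (2 * n + 5) := by
  rintro (h | h | ⟨_, h, _⟩) <;> omega

theorem hat_not_top {u : ℕ} (hu : u < 2 * n + 4) : ¬ SnakeHatLE n w (2 * n + 4) u := by
  rintro (h | h | ⟨h, _, _⟩) <;> omega

/-- elements of the lattice -/
def mk (w : ℕ → Letter) (a : ℕ) (ha : a < 2 * n + 6) : SnakeHat n w := ⟨a, ha⟩

theorem hat_le (x y : SnakeHat n w) : x ≤ y ↔ SnakeHatLE n w x.1 y.1 := Iff.rfl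

theorem hat_refl {a : ℕ} (ha : a < 2 * n + 6) : SnakeHatLE n w a a :=
  le_refl (mk w a ha)

theorem hat_trans {a b c : ℕ} (ha : a < 2 * n + 6) (hb : b < 2 * n + 6) (hc : c < 2 * n + 6)
    (h1 : SnakeHatLE n w a b) (h2 : SnakeHatLE n w b c) : SnakeHatLE n w a c :=
  le_trans (a := mk w a ha) (b := mk w b hb) (c := mk w c hc) h1 h2

theorem hat_antisymm {a b : ℕ} (ha : a < 2 * n + 6) (hb : b < 2 * n + 6)
    (h1 : SnakeHatLE n w a b) (h2 : SnakeHatLE n w b a) : a = b :=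
  congrArg Fin.val (le_antisymm (a := mk w a ha) (b := mk w b hb) h1 h2)

theorem hat_meet {m : ℕ} (hm : m ≤ n) {c : ℕ} (hc : c < 2 * n + 6)
    (h1 : SnakeHatLE n w c (2 * m + 1)) (h2 : SnakeHatLE n w c (2 * m + 2)) :
    SnakeHatLE n w c (2 * m + 3) := by
  rcases (by omega : c = 2 * n + 5 ∨ c = 2 * n + 4 ∨ c < 2 * n + 4) with rfl | rfl | hc
  · exact hat_bot _
  · exact absurd h1 (hat_not_top (by omega))
  · rw [hat_iff hc (by omega)] at *
    exact meet_aux c hc h1 h2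

open Classical in
/-- 0/1 version of the hat order -/
noncomputable def zt (n : ℕ) (w : ℕ → Letter) (x u : ℕ) : ℝ := if SnakeHatLE n w x u then 1 else 0

theorem zt_square {m u : ℕ} (hm : m ≤ n) (hu : u < 2 * n + 6) :
    zt n w (2 * m + 3) u + zt n w (snakeSide w m) u - zt n w (2 * m + 1) u - zt n w (2 * m + 2) u
      = if u = 2 * m + 3 then 1 else 0 := by
  classical
  have s1 := side_le (w := w) m
  unfold zt
  rcases (by omega : u = 2 * n + 5 ∨ u = 2 * n + 4 ∨ u < 2 * n + 4) with rfl | rfl | hu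
  · rw [if_neg (hat_not_bot (by omega)), if_neg (hat_not_bot (by omega)),
      if_neg (hat_not_bot (by omega)), if_neg (hat_not_bot (by omega)), if_neg (by omega)]
    norm_num
  · rw [if_pos (hat_top _), if_pos (hat_top _), if_pos (hat_top _), if_pos (hat_top _),
      if_neg (by omega)]
    norm_num
  · simp only [hat_iff (w := w) (show 2 * m + 3 < 2 * n + 4 by omega) hu,
      hat_iff (w := w) (show 2 * m + 2 < 2 * n + 4 by omega) hu,
      hat_iff (w := w) (show 2 * m + 1 < 2 * n + 4 by omega) hu,
      hat_iff (w := w) (show snakeSide w m < 2 * n + 4 by omega) hu]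
    have i1 : SnakeLE n w (snakeSide w m) u → SnakeLE n w (2 * m + 1) u := fun h =>
      Relation.ReflTransGen.trans (odd_le m _ (by omega) (by omega)) h
    have i2 : SnakeLE n w (snakeSide w m) u → SnakeLE n w (2 * m + 2) u := fun h =>
      Relation.ReflTransGen.head (cov_even hm) h
    have i3 : SnakeLE n w (2 * m + 1) u → SnakeLE n w (2 * m + 3) u := fun h =>
      Relation.ReflTransGen.head (cov_odd1 hm) h
    have i4 : SnakeLE n w (2 * m + 2) u → SnakeLE n w (2 * m + 3) u := fun h =>
      Relation.ReflTransGen.head (cov_odd2 hm) h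
    have i5 := @le_even n w m u
    have i6 := @le_odd n w m u
    have i7 : SnakeLE n w (2 * m + 1) u → u ≤ 2 * m + 1 := snakeLE_le
    have i8 : SnakeLE n w (2 * m + 2) u → u ≤ 2 * m + 2 := snakeLE_le
    have i9 : u = 2 * m + 3 → SnakeLE n w (2 * m + 3) u := fun h => by
      rw [h]; exact Relation.ReflTransGen.refl
    by_cases c1 : SnakeLE n w (snakeSide w m) u
    · have := i7 (i1 c1)
      rw [if_pos (i3 (i1 c1)), if_pos c1, if_pos (i1 c1), if_pos (i2 c1), if_neg (by omega)]
      norm_num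
    · rw [if_neg c1]
      by_cases c2 : SnakeLE n w (2 * m + 1) u
      · have := i7 c2
        have c3 : ¬ SnakeLE n w (2 * m + 2) u := fun h => by
          rcases i5 h with h | h
          · omega
          · exact c1 h
        rw [if_pos (i3 c2), if_pos c2, if_neg c3, if_neg (by omega)]; norm_num
      · by_cases c3 : SnakeLE n w (2 * m + 2) u
        · have := i8 c3
          rw [if_pos (i4 c3), if_neg c2, if_pos c3, if_neg (by omega)]; norm_num
        · by_cases c4 : u = 2 * m + 3
          · rw [if_pos (i9 c4), if_neg c2, if_neg c3, if_pos c4]; norm_num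
          · have c5 : ¬ SnakeLE n w (2 * m + 3) u := fun h => by
              rcases i6 h with h | h | h
              · exact c4 h
              · exact c2 h
              · exact c3 h
            rw [if_neg c5, if_neg c2, if_neg c3, if_neg c4]; norm_num

theorem zt_inj (l : ℕ → ℝ) (h : ∀ u < 2 * n + 6, ∑ x ∈ Finset.range (2 * n + 6), l x * zt n w x u = 0) :
    ∀ x < 2 * n + 6, l x = 0 := by
  by_contra hcon
  push Not at hcon
  obtain ⟨x0, hx0, hl0⟩ := hcon
  let key : ℕ → ℕ := fun x => if x = 2 * n + 5 then 0 else if x = 2 * n + 4 then 2 * n + 5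
    else 2 * n + 4 - x
  obtain ⟨x, hx, hmin⟩ := Finset.exists_min_image
    ((Finset.range (2 * n + 6)).filter fun x => l x ≠ 0) key
    ⟨x0, by simp [hx0, hl0]⟩
  simp only [Finset.mem_filter, Finset.mem_range] at hx hmin
  have := h x hx.1
  rw [Finset.sum_eq_single x] at this
  · rw [zt, if_pos (hat_refl hx.1), mul_one] at this
    exact hx.2 this
  · intro y hy hyx
    rw [Finset.mem_range] at hy
    by_cases hl : l y = 0
    · rw [hl, zero_mul]
    · have hk := hmin y ⟨hy, hl⟩
      rw [zt, if_neg, mul_zero]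
      rintro (h | h | ⟨h1, h2, h⟩)
      · simp only [key] at hk
        split_ifs at hk <;> omega
      · simp only [key] at hk
        split_ifs at hk <;> omega
      · have := snakeLE_le h
        simp only [key] at hk
        split_ifs at hk <;> omega
  · intro h; exact absurd (Finset.mem_range.2 hx.1) h

theorem mi_of_cover (x u : ℕ) (hx : x < 2 * n + 6) (hu : u < 2 * n + 6)
    (h : ∀ y < 2 * n + 6, SnakeHatLE n w x y → y = x ∨ SnakeHatLE n w u y)
    (hux : ¬ SnakeHatLE n w u x) : MeetIrred (mk w x hx) := by
  constructor
  · intro ht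
    exact hux (ht (mk w u hu))
  · intro y z hg
    by_contra hcon
    push Not at hcon
    have hy : SnakeHatLE n w x y.1 := hg.1 (by simp)
    have hz : SnakeHatLE n w x z.1 := hg.1 (by simp)
    have hy' : SnakeHatLE n w u y.1 := by
      rcases h y.1 y.2 hy with h | h
      · exact absurd (Fin.ext h.symm) hcon.1
      · exact h
    have hz' : SnakeHatLE n w u z.1 := by
      rcases h z.1 z.2 hz with h | h
      · exact absurd (Fin.ext h.symm) hcon.2
      · exact h
    apply hux
    have : mk w u hu ≤ mk w x hx := by
      apply hg.2
      rintro a (rfl | rfl)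
      · exact hy'
      · exact hz'
    exact this

theorem mi_even {m : ℕ} (hm : m ≤ n) (hx : 2 * m + 2 < 2 * n + 6) :
    MeetIrred (mk w (2 * m + 2) hx) := by
  have s1 := side_le (w := w) m
  apply mi_of_cover (2 * m + 2) (snakeSide w m) hx (by omega)
  · intro y hy h
    rcases (by omega : y = 2 * n + 5 ∨ y = 2 * n + 4 ∨ y < 2 * n + 4) with rfl | rfl | hy
    · exact absurd h (hat_not_bot (by omega))
    · exact Or.inr (hat_top _)
    · rw [hat_iff (by omega) hy] at h ⊢
      exact le_even h
  · rw [hat_iff (by omega) (by omega)]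
    intro h
    have := snakeLE_le h
    omega

theorem mi_zero (hx : 0 < 2 * n + 6) : MeetIrred (mk w 0 hx) := by
  apply mi_of_cover 0 (2 * n + 4) hx (by omega)
  · intro y hy h
    rcases (by omega : y = 2 * n + 5 ∨ y = 2 * n + 4 ∨ y < 2 * n + 4) with rfl | rfl | hy
    · exact absurd h (hat_not_bot (by omega))
    · exact Or.inr (hat_top _)
    · rw [hat_iff (by omega) hy] at h
      have := snakeLE_le h
      omega
  · exact hat_not_top (by omega)

theorem mi_one (hx : 1 < 2 * n + 6) : MeetIrred (mk w 1 hx) := by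
  apply mi_of_cover 1 0 hx (by omega)
  · intro y hy h
    rcases (by omega : y = 2 * n + 5 ∨ y = 2 * n + 4 ∨ y < 2 * n + 4) with rfl | rfl | hy
    · exact absurd h (hat_not_bot (by omega))
    · exact Or.inr (hat_top _)
    · rw [hat_iff (by omega) hy] at h
      have := snakeLE_le h
      rcases (by omega : y = 1 ∨ y = 0) with rfl | rfl
      · exact Or.inl rfl
      · exact Or.inr (hat_refl (by omega))
  · rw [hat_iff (by omega) (by omega)]
    intro h
    have := snakeLE_le h
    omega

theorem mi_bot (hx : 2 * n + 5 < 2 * n + 6) : MeetIrred (mk w (2 * n + 5) hx) := by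
  apply mi_of_cover (2 * n + 5) (2 * n + 3) hx (by omega)
  · intro y hy h
    rcases (by omega : y = 2 * n + 5 ∨ y = 2 * n + 4 ∨ y < 2 * n + 4) with rfl | rfl | hy
    · exact Or.inl rfl
    · exact Or.inr (hat_top _)
    · rw [hat_iff (by omega) hy]
      exact Or.inr (odd_le (n + 1) _ (by omega) (by omega))
  · exact hat_not_bot (by omega)

theorem mi_not_top (hx : 2 * n + 4 < 2 * n + 6) : ¬ MeetIrred (mk w (2 * n + 4) hx) :=
  fun h => h.1 fun _ => hat_top _

theorem mi_not_odd {m : ℕ} (hm : m ≤ n) (hx : 2 * m + 3 < 2 * n + 6) :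
    ¬ MeetIrred (mk w (2 * m + 3) hx) := by
  intro h
  have hg : IsGLB {mk w (2 * m + 1) (by omega), mk w (2 * m + 2) (by omega)}
      (mk w (2 * m + 3) hx) := by
    constructor
    · rintro a (rfl | rfl)
      · show SnakeHatLE n w (2 * m + 3) (2 * m + 1)
        exact (hat_iff (by omega) (by omega)).2 (Relation.ReflTransGen.single (cov_odd1 hm))
      · show SnakeHatLE n w (2 * m + 3) (2 * m + 2)
        exact (hat_iff (by omega) (by omega)).2 (Relation.ReflTransGen.single (cov_odd2 hm))
    · intro c hc
      exact hat_meet hm c.2 (hc (Set.mem_insert _ _)) (hc (Set.mem_insert_of_mem _ rfl))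
  rcases h.2 _ _ hg with h | h
  · have := congrArg Fin.val h
    simp [mk] at this
  · have := congrArg Fin.val h
    simp [mk] at this

theorem q_cases (q : SnakeQ n w) : q.1.1 = 2 * n + 5 ∨ q.1.1 = 1 ∨ (q.1.1 < 2 * n + 4 ∧ q.1.1 % 2 = 0) := by
  obtain ⟨⟨x, hx⟩, hq⟩ := q
  show x = 2 * n + 5 ∨ x = 1 ∨ (x < 2 * n + 4 ∧ x % 2 = 0)
  by_contra hcon
  rcases Nat.even_or_odd' x with ⟨k, hk | hk⟩
  · obtain rfl : x = 2 * n + 4 := by omega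
    exact mi_not_top hx hq
  · obtain ⟨m, rfl⟩ : ∃ m, k = m + 1 := ⟨k - 1, by omega⟩
    obtain rfl : x = 2 * m + 3 := by omega
    exact mi_not_odd (by omega) hx hq

theorem q_exists {x : ℕ} (h : x = 2 * n + 5 ∨ x = 1 ∨ (x < 2 * n + 4 ∧ x % 2 = 0)) :
    ∃ q : SnakeQ n w, q.1.1 = x := by
  rcases h with rfl | rfl | ⟨h1, h2⟩
  · exact ⟨⟨mk w _ (by omega), mi_bot _⟩, rfl⟩
  · exact ⟨⟨mk w _ (by omega), mi_one _⟩, rfl⟩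
  · rcases Nat.eq_zero_or_pos x with rfl | hp
    · exact ⟨⟨mk w _ (by omega), mi_zero _⟩, rfl⟩
    · obtain ⟨m, rfl⟩ : ∃ m, x = 2 * m + 2 := ⟨x / 2 - 1, by omega⟩
      exact ⟨⟨mk w _ (by omega), mi_even (by omega) _⟩, rfl⟩

/-- the vertex associated with a lattice element -/
noncomputable def ph (n : ℕ) (w : ℕ → Letter) (x : ℕ) : SnakeQ n w → ℝ := fun q => zt n w x q.1.1

theorem le_of_ph {y : ℕ} (hy : y < 2 * n + 6) : ∀ x < 2 * n + 6,
    (∀ q : SnakeQ n w, SnakeHatLE n w x q.1.1 → SnakeHatLE n w y q.1.1) → SnakeHatLE n w y x := by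
  intro x
  induction x using Nat.strong_induction_on with
  | _ x ih =>
    intro hx h
    by_cases hq : x = 2 * n + 5 ∨ x = 1 ∨ (x < 2 * n + 4 ∧ x % 2 = 0)
    · obtain ⟨q, rfl⟩ := q_exists (w := w) hq
      exact h q (hat_refl hx)
    · rcases Nat.even_or_odd' x with ⟨k, hk | hk⟩
      · obtain rfl : x = 2 * n + 4 := by omega
        exact hat_top _
      · obtain ⟨m, rfl⟩ : ∃ m, k = m + 1 := ⟨k - 1, by omega⟩
        obtain rfl : x = 2 * m + 3 := by omega
        have hm : m ≤ n := by omega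
        apply hat_meet hm hy
        · refine ih _ (by omega) (by omega) fun q hq => h q ?_
          exact hat_trans hx (by omega) q.1.2 ((hat_iff (by omega) (by omega)).2
            (Relation.ReflTransGen.single (cov_odd1 hm))) hq
        · refine ih _ (by omega) (by omega) fun q hq => h q ?_
          exact hat_trans hx (by omega) q.1.2 ((hat_iff (by omega) (by omega)).2
            (Relation.ReflTransGen.single (cov_odd2 hm))) hq

theorem zt_eq_one {x u : ℕ} : zt n w x u = 1 ↔ SnakeHatLE n w x u := by
  unfold zt; split <;> simp [*]

theorem ph_inj {x y : ℕ} (hx : x < 2 * n + 6) (hy : y < 2 * n + 6) (h : ph n w x = ph n w y) :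
    x = y := by
  have key : ∀ q : SnakeQ n w, SnakeHatLE n w x q.1.1 ↔ SnakeHatLE n w y q.1.1 := fun q => by
    rw [← zt_eq_one, ← zt_eq_one]
    have := congrFun h q
    unfold ph at this
    rw [this]
  exact hat_antisymm hx hy (le_of_ph hx y hy fun q => (key q).2) (le_of_ph hy x hx fun q => (key q).1)

theorem ph_mem (x : ℕ) (hx : x < 2 * n + 6) : ph n w x ∈ OPVertexSet (SnakeQ n w) := by
  refine ⟨{q | SnakeHatLE n w x q.1.1}, fun a ha b hab => ?_, ?_⟩
  · exact hat_trans hx a.1.2 b.1.2 ha hab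
  · funext q
    by_cases h : SnakeHatLE n w x q.1.1
    · simp [ph, zt, h]
    · simp [ph, zt, h]

theorem ph_eq_indicator {x : ℕ} {A : Set (SnakeQ n w)}
    (h : ∀ q : SnakeQ n w, SnakeHatLE n w x q.1.1 ↔ q ∈ A) :
    A.indicator (fun _ => (1 : ℝ)) = ph n w x := by
  funext q
  by_cases h' : q ∈ A
  · simp [ph, zt, h, h']
  · simp [ph, zt, h, h']

theorem ph_surj {v : SnakeQ n w → ℝ} (hv : v ∈ OPVertexSet (SnakeQ n w)) :
    ∃ x < 2 * n + 6, v = ph n w x := by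
  classical
  obtain ⟨A, hA, rfl⟩ := hv
  suffices h : ∃ x < 2 * n + 6, ∀ q : SnakeQ n w, SnakeHatLE n w x q.1.1 ↔ q ∈ A by
    obtain ⟨x, hx, h⟩ := h
    exact ⟨x, hx, ph_eq_indicator h⟩
  by_cases hb : ∃ q ∈ A, q.1.1 = 2 * n + 5
  · obtain ⟨q0, h0, h1⟩ := hb
    refine ⟨2 * n + 5, by omega, fun q => ⟨fun _ => hA q0 h0 q ?_, fun _ => hat_bot _⟩⟩
    show SnakeHatLE n w _ _
    rw [h1]; exact hat_bot _
  push Not at hb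
  by_cases he : ∃ q, q ∈ A
  swap
  · push Not at he
    refine ⟨2 * n + 4, by omega, fun q => ⟨fun h => ?_, fun h => absurd h (he q)⟩⟩
    exfalso
    rcases q_cases q with h1 | h1 | ⟨h1, h2⟩
    · rw [h1] at h; exact hat_not_bot (by omega) h
    · rw [h1] at h; exact hat_not_top (by omega) h
    · exact hat_not_top (by omega) h
  -- the element of `A` with the largest index
  have hbd : ∀ q ∈ A, q.1.1 < 2 * n + 4 ∧ (q.1.1 % 2 = 0 ∨ q.1.1 = 1) := fun q hq => by
    have := hb q hq
    rcases q_cases q with h1 | h1 | ⟨h1, h2⟩ <;> omega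
  obtain ⟨p, hp, hmax⟩ : ∃ p ∈ A, ∀ q ∈ A, q.1.1 ≤ p.1.1 := by
    have hne : ∃ k, ∃ q ∈ A, q.1.1 = k := ⟨_, he.choose, he.choose_spec, rfl⟩
    obtain ⟨q, hq, hqe⟩ := Nat.findGreatest_spec (P := fun k => ∃ q ∈ A, q.1.1 = k)
      (n := 2 * n + 6) (m := he.choose.1.1) he.choose.1.2.le ⟨_, he.choose_spec, rfl⟩
    refine ⟨q, hq, fun r hr => ?_⟩
    rw [hqe]
    exact Nat.le_findGreatest r.1.2.le ⟨r, hr, rfl⟩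
  have hpb := hbd p hp
  have up : ∀ q : SnakeQ n w, q.1.1 < 2 * n + 4 → SnakeLE n w p.1.1 q.1.1 → q ∈ A :=
    fun q h1 h2 => hA p hp q ((hat_iff hpb.1 h1).2 h2)
  by_cases hsmall : p.1.1 ≤ 1
  · refine ⟨p.1.1, p.1.2, fun q => ⟨fun h => hA p hp q h, fun h => ?_⟩⟩
    have h1 := hmax q h
    rw [hat_iff hpb.1 (hbd q h).1]
    rcases (by omega : q.1.1 = p.1.1 ∨ (q.1.1 = 0 ∧ p.1.1 = 1)) with h2 | ⟨h2, h3⟩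
    · rw [h2]; exact Relation.ReflTransGen.refl
    · rw [h2, h3]; exact Relation.ReflTransGen.single SnakeCov.cov10
  · obtain ⟨m, hm⟩ : ∃ m, p.1.1 = 2 * m + 2 := ⟨p.1.1 / 2 - 1, by omega⟩
    have hmn : m ≤ n := by omega
    obtain ⟨q0, hq0, hq0'⟩ := even_le (w := w) m hmn
    rw [hm] at up hmax
    by_cases hin : ∃ q ∈ A, q.1.1 = q0
    · obtain ⟨r, hr, hre⟩ := hin
      refine ⟨2 * m + 3, by omega, fun q => ⟨fun h => ?_, fun h => ?_⟩⟩
      · have hlt : q.1.1 < 2 * n + 4 ∧ (q.1.1 % 2 = 0 ∨ q.1.1 = 1) := by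
          rcases q_cases q with h1 | h1 | ⟨h1, h2⟩
          · rw [h1] at h; exact absurd h (hat_not_bot (by omega))
          · omega
          · omega
        rw [hat_iff (by omega) hlt.1] at h
        have h3 := snakeLE_le h
        by_cases h4 : q.1.1 = q0
        · have : q = r := Subtype.ext (Fin.ext (h4.trans hre.symm))
          rw [this]; exact hr
        · by_cases h5 : q.1.1 = 2 * m + 2
          · have : q = p := Subtype.ext (Fin.ext (h5.trans hm.symm))
            rw [this]; exact hp
          · exact up q hlt.1 (hq0' _ (by omega) hlt.2 h4)
      · have := hmax q h
        rw [hat_iff (by omega) (hbd q h).1]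
        exact odd_le (m + 1) _ (by omega) (by omega)
    · push Not at hin
      refine ⟨2 * m + 2, by omega, fun q => ⟨fun h => ?_, fun h => ?_⟩⟩
      · have : p ≤ q := by
          show SnakeHatLE n w _ _
          rw [hm]; exact h
        exact hA p hp q this
      · have h1 := hmax q h
        rw [hat_iff (by omega) (hbd q h).1]
        by_cases h5 : q.1.1 = 2 * m + 2
        · rw [h5]; exact Relation.ReflTransGen.refl
        · exact hq0' _ (by omega) (hbd q h).2 (hin q h)

/-- affine dependencies among the vertices -/
def Dep (n : ℕ) (w : ℕ → Letter) (l : ℕ → ℝ) : Prop :=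
  (∀ x, 2 * n + 6 ≤ x → l x = 0) ∧ ∑ x ∈ Finset.range (2 * n + 6), l x = 0 ∧
    ∀ q : SnakeQ n w, ∑ x ∈ Finset.range (2 * n + 6), l x * ph n w x q = 0

theorem affInd_iff {X : Finset ℕ} (hX : X ⊆ Finset.range (2 * n + 6)) :
    AffineIndependent ℝ (Subtype.val : (ph n w '' (X : Set ℕ)) → (SnakeQ n w → ℝ)) ↔
      ∀ l, Dep n w l → (∀ x ∉ X, l x = 0) → ∀ x, l x = 0 := by
  have hlt : ∀ x ∈ X, x < 2 * n + 6 := fun x hx => Finset.mem_range.1 (hX hx)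
  have hinj : Set.InjOn (ph n w) (X : Set ℕ) := fun x hx y hy h => ph_inj (hlt x hx) (hlt y hy) h
  let e := Equiv.Set.imageOfInjOn (ph n w) (X : Set ℕ) hinj
  rw [← affineIndependent_equiv e]
  have hval : (Subtype.val ∘ e : ↥(X : Set ℕ) → (SnakeQ n w → ℝ)) = fun x => ph n w x.1 := by
    funext x; rfl
  rw [hval, affineIndependent_iff]
  have sumX : ∀ f : ℕ → ℝ, (∀ x ∉ X, f x = 0) → ∑ x ∈ Finset.range (2 * n + 6), f x = ∑ x ∈ X, f x := by
    intro f hf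
    exact (Finset.sum_subset hX fun x _ hx => hf x hx).symm
  constructor
  · intro h l ⟨h0, h1, h2⟩ hl x
    by_cases hx : x ∈ X
    · refine h Finset.univ (fun x => l x.1) ?_ ?_ ⟨x, hx⟩ (Finset.mem_univ _)
      · rw [sumX l hl] at h1
        rw [← h1]
        exact Finset.sum_coe_sort X l
      · funext q
        have := h2 q
        rw [sumX _ (fun x hx => by rw [hl x hx, zero_mul])] at this
        rw [Finset.sum_apply, Pi.zero_apply, ← this]
        exact Finset.sum_coe_sort X (fun x => l x * ph n w x q)
    · exact hl x hx
  · intro h s v hs hv x hx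
    classical
    let l : ℕ → ℝ := fun x => if hx : x ∈ X then (if (⟨x, hx⟩ : (X : Set ℕ)) ∈ s then v ⟨x, hx⟩ else 0) else 0
    have hlX : ∀ x ∉ X, l x = 0 := fun x hx => by simp [l, hx]
    have hsum : ∀ f : ℕ → ℝ, ∑ x ∈ X, l x * f x = ∑ x ∈ s, v x * f x.1 := by
      intro f
      rw [← Finset.sum_coe_sort X]
      have : ∀ x : X, l x.1 * f x.1 = if (⟨x.1, x.2⟩ : (X : Set ℕ)) ∈ s then v ⟨x.1, x.2⟩ * f x.1 else 0 := by
        intro x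
        simp only [l, x.2, dif_pos]
        split <;> simp
      rw [Finset.sum_congr rfl fun x _ => this x]
      exact (Finset.sum_ite_mem Finset.univ s (fun x : (X : Set ℕ) => v x * f x.1)).trans
        (Finset.sum_congr (by ext i; exact ⟨fun h => (Finset.mem_inter.1 h).2,
          fun h => Finset.mem_inter.2 ⟨Finset.mem_univ _, h⟩⟩) fun _ _ => rfl)
    have := h l ⟨fun x hx => hlX x fun h => by have := hlt x h; omega, ?_, fun q => ?_⟩ hlX x.1
    · have hx' : x.1 ∈ X := x.2
      simpa [l, hx', hx] using this
    · rw [sumX l hlX]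
      have := hsum fun _ => 1
      simp only [mul_one] at this
      rw [this, hs]
    · rw [sumX _ (fun x hx => by rw [hlX x hx, zero_mul]), hsum fun x => ph n w x q]
      have := congrFun hv q
      rw [Finset.sum_apply] at this
      exact this

theorem circuit_iff {X : Finset ℕ} (hX : X ⊆ Finset.range (2 * n + 6)) :
    IsAffCircuit (ph n w '' (X : Set ℕ)) ↔
      (∃ l, Dep n w l ∧ (∀ x ∉ X, l x = 0) ∧ ∃ x, l x ≠ 0) ∧
      ∀ l, Dep n w l → (∀ x ∉ X, l x = 0) → (∃ x ∈ X, l x = 0) → ∀ x, l x = 0 := by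
  have hlt : ∀ x ∈ X, x < 2 * n + 6 := fun x hx => Finset.mem_range.1 (hX hx)
  have hinj : Set.InjOn (ph n w) (X : Set ℕ) := fun x hx y hy h => ph_inj (hlt x hx) (hlt y hy) h
  unfold IsAffCircuit
  apply and_congr
  · rw [affInd_iff hX]
    push Not
    rfl
  · constructor
    · rintro h l hl hlX ⟨y, hy, hly⟩
      have hsub : (X.erase y) ⊆ Finset.range (2 * n + 6) := (Finset.erase_subset _ _).trans hX
      have := h (ph n w '' ((X.erase y : Finset ℕ) : Set ℕ)) (by
        rw [Set.ssubset_iff_of_subset (Set.image_mono (by simp))]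
        refine ⟨ph n w y, ⟨y, hy, rfl⟩, ?_⟩
        rintro ⟨z, hz, hzy⟩
        have hz' : z ∈ X.erase y := hz
        rw [Finset.mem_erase] at hz'
        exact hz'.1 (ph_inj (hlt z hz'.2) (hlt y hy) hzy))
      rw [affInd_iff hsub] at this
      refine this l hl fun x hx => ?_
      by_cases hxy : x = y
      · rw [hxy, hly]
      · exact hlX x fun h => hx (Finset.mem_erase.2 ⟨hxy, h⟩)
    · intro h Y hY
      obtain ⟨z, hz, hzY⟩ := Set.exists_of_ssubset hY
      obtain ⟨y, hy, rfl⟩ := hz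
      have hsub : (X.erase y) ⊆ Finset.range (2 * n + 6) := (Finset.erase_subset _ _).trans hX
      have key : AffineIndependent ℝ
          (Subtype.val : (ph n w '' ((X.erase y : Finset ℕ) : Set ℕ)) → (SnakeQ n w → ℝ)) := by
        rw [affInd_iff hsub]
        intro l hl hlX
        refine h l hl (fun x hx => hlX x fun h => hx (Finset.mem_of_mem_erase h)) ⟨y, hy, hlX y (by simp)⟩
      refine key.mono fun z hz => ?_
      obtain ⟨x, hx, rfl⟩ := hY.1 hz
      refine ⟨x, ?_, rfl⟩
      show x ∈ X.erase y
      rw [Finset.mem_erase]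
      refine ⟨fun h => hzY (h ▸ hz), hx⟩

theorem exists_X {Z : Set (SnakeQ n w → ℝ)} (hZ : Z ⊆ OPVertexSet (SnakeQ n w)) :
    ∃ X : Finset ℕ, X ⊆ Finset.range (2 * n + 6) ∧ Z = ph n w '' (X : Set ℕ) := by
  classical
  refine ⟨(Finset.range (2 * n + 6)).filter fun x => ph n w x ∈ Z, Finset.filter_subset _ _, ?_⟩
  ext v
  constructor
  · intro hv
    obtain ⟨x, hx, rfl⟩ := ph_surj (hZ hv)
    exact ⟨x, by simp [hx, hv], rfl⟩
  · rintro ⟨x, hx, rfl⟩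
    simp at hx
    exact hx.2

theorem ncard_X {X : Finset ℕ} (hX : X ⊆ Finset.range (2 * n + 6)) :
    (ph n w '' (X : Set ℕ)).ncard = X.card := by
  have hlt : ∀ x ∈ X, x < 2 * n + 6 := fun x hx => Finset.mem_range.1 (hX hx)
  rw [Set.InjOn.ncard_image fun x hx y hy h => ph_inj (hlt x hx) (hlt y hy) h,
    Set.ncard_coe_finset]

theorem image_mem {X : Finset ℕ} (hX : X ⊆ Finset.range (2 * n + 6)) :
    ph n w '' (X : Set ℕ) ⊆ OPVertexSet (SnakeQ n w) := by
  rintro _ ⟨x, hx, rfl⟩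
  exact ph_mem x (Finset.mem_range.1 (hX hx))

/-- nonzero dependencies have support at least four -/
theorem four_le {l : ℕ → ℝ} (hl : Dep n w l) (hne : ∃ x, l x ≠ 0) {X : Finset ℕ}
    (hX : X ⊆ Finset.range (2 * n + 6)) (hlX : ∀ x ∉ X, l x = 0) : 4 ≤ X.card := by
  classical
  have sumX : ∀ f : ℕ → ℝ, (∀ x ∉ X, f x = 0) → ∑ x ∈ Finset.range (2 * n + 6), f x = ∑ x ∈ X, f x := by
    intro f hf
    exact (Finset.sum_subset hX fun x _ hx => hf x hx).symm
  have hlt : ∀ x ∈ X, x < 2 * n + 6 := fun x hx => Finset.mem_range.1 (hX hx)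
  have single : ∀ Y ⊆ X, ∀ a ∈ Y, l a ≠ 0 → ∑ x ∈ Y, l x = 0 → ∃ b ∈ Y, b ≠ a ∧ l b ≠ 0 := by
    intro Y _ a ha hla hs
    by_contra hcon
    push Not at hcon
    rw [Finset.sum_eq_single_of_mem a ha (fun b hb hba => hcon b hb hba)] at hs
    exact hla hs
  obtain ⟨a, ha⟩ := hne
  have haX : a ∈ X := by by_contra h; exact ha (hlX a h)
  have h1 := hl.2.1
  rw [sumX l hlX] at h1
  obtain ⟨b, hb, hba, hlb⟩ := single X (Finset.Subset.refl _) a haX ha h1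
  obtain ⟨q, hq⟩ : ∃ q, ph n w b q ≠ ph n w a q := by
    by_contra hcon
    push Not at hcon
    exact hba (ph_inj (hlt b hb) (hlt a haX) (funext hcon))
  have h2 := hl.2.2 q
  rw [sumX _ (fun x hx => by rw [hlX x hx, zero_mul])] at h2
  have h2' : ∑ x ∈ X.filter (fun x => SnakeHatLE n w x q.1.1), l x = 0 := by
    rw [Finset.sum_filter]
    refine Eq.trans ?_ h2
    refine Finset.sum_congr rfl fun x _ => ?_
    unfold ph zt
    split <;> simp
  have h3' : ∑ x ∈ X.filter (fun x => ¬ SnakeHatLE n w x q.1.1), l x = 0 := by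
    have := Finset.sum_filter_add_sum_filter_not X (fun x => SnakeHatLE n w x q.1.1) l
    rw [h1, h2', zero_add] at this
    exact this
  have two : ∀ Y ⊆ X, (∃ a ∈ Y, l a ≠ 0) → ∑ x ∈ Y, l x = 0 → 2 ≤ Y.card := by
    rintro Y hY ⟨a, ha, hla⟩ hs
    obtain ⟨b, hb, hba, _⟩ := single Y hY a ha hla hs
    exact Finset.one_lt_card.2 ⟨b, hb, a, ha, hba⟩
  have hcard := Finset.card_filter_add_card_filter_not (s := X) (fun x => SnakeHatLE n w x q.1.1)
  have hboth : (∃ a ∈ X.filter (fun x => SnakeHatLE n w x q.1.1), l a ≠ 0) ∧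
      (∃ a ∈ X.filter (fun x => ¬ SnakeHatLE n w x q.1.1), l a ≠ 0) := by
    simp only [Finset.mem_filter]
    unfold ph zt at hq
    by_cases c1 : SnakeHatLE n w a q.1.1 <;> by_cases c2 : SnakeHatLE n w b q.1.1
    · simp [c1, c2] at hq
    · exact ⟨⟨a, ⟨haX, c1⟩, ha⟩, ⟨b, ⟨hb, c2⟩, hlb⟩⟩
    · exact ⟨⟨b, ⟨hb, c2⟩, hlb⟩, ⟨a, ⟨haX, c1⟩, ha⟩⟩
    · simp [c1, c2] at hq
  have k1 := two _ (Finset.filter_subset _ _) hboth.1 h2'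
  have k2 := two _ (Finset.filter_subset _ _) hboth.2 h3'
  omega

/-- the square relation -/
def sq (w : ℕ → Letter) (m y : ℕ) : ℝ :=
  (if y = 2 * m + 3 then 1 else 0) + (if y = snakeSide w m then 1 else 0)
    - (if y = 2 * m + 1 then 1 else 0) - (if y = 2 * m + 2 then 1 else 0)

/-- combination of square relations -/
noncomputable def lam (n : ℕ) (w : ℕ → Letter) (C : ℕ → ℝ) (y : ℕ) : ℝ :=
  ∑ m ∈ Finset.range (n + 1), C (m + 1) * sq w m y

theorem sum_sq {m : ℕ} (hm : m ≤ n) (f : ℕ → ℝ) :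
    ∑ x ∈ Finset.range (2 * n + 6), sq w m x * f x =
      f (2 * m + 3) + f (snakeSide w m) - f (2 * m + 1) - f (2 * m + 2) := by
  have s1 := side_le (w := w) m
  unfold sq
  simp only [sub_mul, add_mul, Finset.sum_add_distrib, Finset.sum_sub_distrib, ite_mul, one_mul,
    zero_mul, Finset.sum_ite_eq', Finset.mem_range]
  rw [if_pos (by omega), if_pos (by omega), if_pos (by omega), if_pos (by omega)]

theorem sum_lam (C : ℕ → ℝ) (f : ℕ → ℝ) :
    ∑ x ∈ Finset.range (2 * n + 6), lam n w C x * f x =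
      ∑ m ∈ Finset.range (n + 1), C (m + 1) *
        (f (2 * m + 3) + f (snakeSide w m) - f (2 * m + 1) - f (2 * m + 2)) := by
  unfold lam
  simp only [Finset.sum_mul]
  rw [Finset.sum_comm]
  refine Finset.sum_congr rfl fun m hm => ?_
  rw [Finset.mem_range] at hm
  rw [← sum_sq (n := n) (m := m) (by omega), Finset.mul_sum]
  exact Finset.sum_congr rfl fun x _ => mul_assoc _ _ _

theorem zt_lam (C : ℕ → ℝ) {u : ℕ} (hu : u < 2 * n + 6) :
    ∑ x ∈ Finset.range (2 * n + 6), lam n w C x * zt n w x u =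
      ∑ m ∈ Finset.range (n + 1), C (m + 1) * if u = 2 * m + 3 then 1 else 0 := by
  rw [sum_lam]
  refine Finset.sum_congr rfl fun m hm => ?_
  rw [Finset.mem_range] at hm
  rw [zt_square (by omega) hu]

theorem zt_lam_odd (C : ℕ → ℝ) {k : ℕ} (hk : k ≤ n) :
    ∑ x ∈ Finset.range (2 * n + 6), lam n w C x * zt n w x (2 * k + 3) = C (k + 1) := by
  rw [zt_lam C (by omega), Finset.sum_eq_single k]
  · simp
  · intro m _ hm
    rw [if_neg (by omega), mul_zero]
  · intro h
    exact absurd (Finset.mem_range.2 (by omega)) h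

theorem zt_lam_zero (C : ℕ → ℝ) {u : ℕ} (hu : u < 2 * n + 6) (h : ∀ m ≤ n, u ≠ 2 * m + 3) :
    ∑ x ∈ Finset.range (2 * n + 6), lam n w C x * zt n w x u = 0 := by
  rw [zt_lam C hu]
  refine Finset.sum_eq_zero fun m hm => ?_
  rw [Finset.mem_range] at hm
  rw [if_neg (h m (by omega)), mul_zero]

theorem lam_big (C : ℕ → ℝ) {x : ℕ} (hx : 2 * n + 4 ≤ x) : lam n w C x = 0 := by
  unfold lam
  refine Finset.sum_eq_zero fun m hm => ?_
  rw [Finset.mem_range] at hm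
  have s1 := side_le (w := w) m
  unfold sq
  rw [if_neg (by omega), if_neg (by omega), if_neg (by omega), if_neg (by omega)]
  norm_num

theorem zt_top (x : ℕ) : zt n w x (2 * n + 4) = 1 := zt_eq_one.2 (hat_top x)

theorem dep_lam (C : ℕ → ℝ) : Dep n w (lam n w C) := by
  refine ⟨fun x hx => lam_big C (by omega), ?_, fun q => ?_⟩
  · have := zt_lam_zero (w := w) C (show 2 * n + 4 < 2 * n + 6 by omega) (fun m _ => by omega)
    simpa only [zt_top, mul_one] using this
  · refine zt_lam_zero C q.1.2 fun m hm h => ?_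
    rcases q_cases q with h1 | h1 | ⟨h1, h2⟩ <;> omega

theorem lam_inj {C : ℕ → ℝ} (h : ∀ x, lam n w C x = 0) : ∀ k ≤ n, C (k + 1) = 0 := by
  intro k hk
  rw [← zt_lam_odd (w := w) C hk]
  exact Finset.sum_eq_zero fun x _ => by rw [h, zero_mul]

theorem exists_lam {l : ℕ → ℝ} (hl : Dep n w l) : ∃ C : ℕ → ℝ, C 0 = 0 ∧ (∀ j, n + 2 ≤ j → C j = 0) ∧
    ∀ x, l x = lam n w C x := by
  let C : ℕ → ℝ := fun j => if 1 ≤ j ∧ j ≤ n + 1 then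
    ∑ x ∈ Finset.range (2 * n + 6), l x * zt n w x (2 * j + 1) else 0
  refine ⟨C, by simp [C], fun j hj => if_neg (by omega), fun x => ?_⟩
  by_cases hx : x < 2 * n + 6
  · have key := zt_inj (n := n) (w := w) (fun x => l x - lam n w C x) (fun u hu => ?_) x hx
    · simpa [sub_eq_zero] using key
    · simp only [sub_mul, Finset.sum_sub_distrib]
      by_cases ho : ∃ m ≤ n, u = 2 * m + 3
      · obtain ⟨m, hm, rfl⟩ := ho
        rw [zt_lam_odd C hm]
        simp only [C]
        rw [if_pos (by omega), sub_eq_zero, show 2 * (m + 1) + 1 = 2 * m + 3 by ring]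
      · push Not at ho
        rw [zt_lam_zero C hu ho, sub_zero]
        by_cases ht : u = 2 * n + 4
        · subst ht
          simpa only [zt_top, mul_one] using hl.2.1
        · obtain ⟨q, rfl⟩ := q_exists (n := n) (w := w) (x := u) (by
            by_contra hcon
            exact ho ((u - 3) / 2) (by omega) (by omega))
          exact hl.2.2 q
  · rw [hl.1 x (by omega), lam_big C (by omega)]

theorem lam_add (C D : ℕ → ℝ) (y : ℕ) : lam n w (C + D) y = lam n w C y + lam n w D y := by
  unfold lam
  rw [← Finset.sum_add_distrib]
  exact Finset.sum_congr rfl fun m _ => by rw [Pi.add_apply, add_mul]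

theorem lam_smul (a : ℝ) (C : ℕ → ℝ) (y : ℕ) : lam n w (a • C) y = a * lam n w C y := by
  unfold lam
  rw [Finset.mul_sum]
  exact Finset.sum_congr rfl fun m _ => by rw [Pi.smul_apply, smul_eq_mul, mul_assoc]

/-- admissible coefficient sequences -/
def Adm (n : ℕ) (C : ℕ → ℝ) : Prop := C 0 = 0 ∧ ∀ j, n + 2 ≤ j → C j = 0

theorem sum_pick {C : ℕ → ℝ} (hC : Adm n C) (P : ℕ → Prop) [DecidablePred P] (a : ℕ)
    (hP : ∀ m, P m → m = a) :
    ∑ m ∈ Finset.range (n + 1), C (m + 1) * (if P m then 1 else 0) = if P a then C (a + 1) else 0 := by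
  by_cases ha : a ≤ n
  · rw [Finset.sum_eq_single a]
    · split <;> simp
    · intro m _ hm
      rw [if_neg fun h => hm (hP m h), mul_zero]
    · intro h
      exact absurd (Finset.mem_range.2 (by omega)) h
  · rw [hC.2 (a + 1) (by omega), ite_self]
    refine Finset.sum_eq_zero fun m hm => ?_
    rw [Finset.mem_range] at hm
    rw [if_neg fun h => by have := hP m h; omega, mul_zero]

theorem lam_split (C : ℕ → ℝ) (y : ℕ) : lam n w C y =
    ∑ m ∈ Finset.range (n + 1), C (m + 1) * (if y = 2 * m + 3 then 1 else 0) +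
    ∑ m ∈ Finset.range (n + 1), C (m + 1) * (if y = snakeSide w m then 1 else 0) -
    ∑ m ∈ Finset.range (n + 1), C (m + 1) * (if y = 2 * m + 1 then 1 else 0) -
    ∑ m ∈ Finset.range (n + 1), C (m + 1) * (if y = 2 * m + 2 then 1 else 0) := by
  unfold lam sq
  simp only [mul_sub, mul_add, Finset.sum_add_distrib, Finset.sum_sub_distrib]

theorem lam_even {C : ℕ → ℝ} (hC : Adm n C) (k : ℕ) :
    lam n w C (2 * k) = (if snakeSide w k = 2 * k then C (k + 1) else 0) - C k := by
  rw [lam_split, sum_pick hC (fun m => 2 * k = 2 * m + 3) 0 (fun m h => by omega),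
    sum_pick hC (fun m => 2 * k = snakeSide w m) k
      (fun m h => by
        have := side_le (w := w) m
        have := side_ge (w := w) m
        omega),
    sum_pick hC (fun m => 2 * k = 2 * m + 1) 0 (fun m h => by omega),
    sum_pick hC (fun m => 2 * k = 2 * m + 2) (k - 1) (fun m h => by omega)]
  rw [if_neg (show ¬ 2 * k = 2 * 0 + 3 by omega), if_neg (show ¬ 2 * k = 2 * 0 + 1 by omega)]
  rcases Nat.eq_zero_or_pos k with rfl | hk
  · simp [side_zero, hC.1]
  · rw [if_pos (show 2 * k = 2 * (k - 1) + 2 by omega), show k - 1 + 1 = k by omega]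
    simp only [eq_comm (a := 2 * k)]
    ring

theorem lam_odd {C : ℕ → ℝ} (hC : Adm n C) (k : ℕ) :
    lam n w C (2 * k + 1) = C k - C (k + 1) + (if snakeSide w (k + 1) = 2 * k + 1 then C (k + 2) else 0) := by
  rw [lam_split, sum_pick hC (fun m => 2 * k + 1 = 2 * m + 3) (k - 1) (fun m h => by omega),
    sum_pick hC (fun m => 2 * k + 1 = snakeSide w m) (k + 1)
      (fun m h => by
        have := side_le (w := w) m
        have := side_ge (w := w) m
        omega),
    sum_pick hC (fun m => 2 * k + 1 = 2 * m + 1) k (fun m h => by omega),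
    sum_pick hC (fun m => 2 * k + 1 = 2 * m + 2) 0 (fun m h => by omega)]
  rw [if_pos rfl, if_neg (show ¬ (2 * k + 1 = 2 * 0 + 2) by omega)]
  simp only [eq_comm (a := 2 * k + 1)]
  rcases Nat.eq_zero_or_pos k with rfl | hk
  · simp [hC.1]
    ring
  · rw [if_pos (show 2 * (k - 1) + 3 = 2 * k + 1 by omega), show k - 1 + 1 = k by omega]
    ring

/-- turns -/
def Tn (n : ℕ) (w : ℕ → Letter) (j : ℕ) : Prop := 2 ≤ j ∧ j ≤ n ∧ w (j - 1) ≠ w j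

instance : DecidablePred (Tn n w) := fun j => by unfold Tn; infer_instance

/-- normalizing the first letter -/
def sg (w : ℕ → Letter) : Equiv.Perm ℕ := if w 1 = Letter.L then Equiv.swap 1 2 else 1

theorem sg_big {y : ℕ} (hy : y ≠ 1 ∧ y ≠ 2) : sg w y = y := by
  unfold sg
  split
  · exact Equiv.swap_apply_of_ne_of_ne hy.1 hy.2
  · rfl

theorem sg_lt {y : ℕ} : sg w y < 2 * n + 4 ↔ y < 2 * n + 4 := by
  by_cases h : y ≠ 1 ∧ y ≠ 2
  · rw [sg_big h]
  · have : sg w y = 1 ∨ sg w y = 2 := by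
      rcases (by omega : y = 1 ∨ y = 2) with rfl | rfl
      · unfold sg; split <;> simp
      · unfold sg; split <;> simp
    omega

theorem V_even {C : ℕ → ℝ} (hC : Adm n C) (k : ℕ) :
    lam n w C (sg w (2 * k)) = (if Tn n w k then 0 else C (k + 1)) - C k := by
  rcases (by omega : k = 0 ∨ k = 1 ∨ 2 ≤ k) with rfl | rfl | hk
  · rw [sg_big (by omega), lam_even hC]
    simp [side_zero, Tn]
  · by_cases hL : w 1 = Letter.L
    · have := lam_odd (w := w) hC 0
      simp only [sg, if_pos hL, mul_one, Equiv.swap_apply_right]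
      rw [show 2 * 0 + 1 = 1 by omega] at this
      rw [this]
      simp [snakeSide, hL, Tn, hC.1]
      ring
    · simp only [sg, if_neg hL, Equiv.Perm.one_apply]
      rw [lam_even hC]
      simp [snakeSide, hL, Tn]
  · rw [sg_big (by omega), lam_even hC]
    by_cases hkn : k ≤ n
    · have h1 : snakeSide w k = 2 * k ↔ ¬ Tn n w k := by
        unfold snakeSide Tn
        split <;> rename_i h
        · have : w (k - 1) ≠ w k := by rcases h with h | h; · omega
                                       · exact h.2
          simp [hk, hkn, this]; omega
        · simp only [not_or, not_and] at h
          have := h.2 hk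
          simp [hk, hkn]; simpa using this
      simp only [h1, ite_not]
    · rw [hC.2 (k + 1) (by omega)]
      simp

theorem V_odd {C : ℕ → ℝ} (hC : Adm n C) (k : ℕ) :
    lam n w C (sg w (2 * k + 1)) = C k - C (k + 1) + (if Tn n w (k + 1) then C (k + 2) else 0) := by
  rcases (by omega : k = 0 ∨ 1 ≤ k) with rfl | hk
  · by_cases hL : w 1 = Letter.L
    · have := lam_even (w := w) hC 1
      simp only [sg, if_pos hL, mul_zero, zero_add, Equiv.swap_apply_left]
      rw [show 2 * 1 = 2 by omega] at this
      rw [this]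
      simp [snakeSide, hL, Tn, hC.1]
    · simp only [sg, if_neg hL, Equiv.Perm.one_apply]
      rw [lam_odd hC]
      simp [snakeSide, hL, Tn]
  · rw [sg_big (by omega), lam_odd hC]
    by_cases hkn : k + 1 ≤ n
    · have h1 : snakeSide w (k + 1) = 2 * k + 1 ↔ Tn n w (k + 1) := by
        unfold snakeSide Tn
        split <;> rename_i h
        · have : w (k + 1 - 1) ≠ w (k + 1) := by rcases h with h | h; · omega
                                                 · exact h.2
          constructor
          · intro _; exact ⟨by omega, hkn, this⟩
          · intro _; omega
        · simp only [not_or, not_and] at h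
          have := h.2 (by omega)
          constructor
          · intro _; omega
          · intro h'; exact absurd h'.2.2 this
      simp only [h1]
    · rw [hC.2 (k + 2) (by omega)]
      simp

theorem Tn_next (hw : InV n w) {j : ℕ} (h : Tn n w j) : ¬ Tn n w (j + 1) := by
  intro h'
  obtain ⟨h1, h2, h3⟩ := h
  obtain ⟨_, h5, h6⟩ := h'
  have := hw (j - 1) (by omega) (by omega)
  rw [show j - 1 + 1 = j by omega, show j - 1 + 2 = j + 1 by omega] at this
  rcases this with h | h
  · exact h3 h
  · exact h6 h

theorem card_pairs (P : ℕ → Prop) [DecidablePred P] (K : ℕ) :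
    ((Finset.range (2 * K)).filter P).card =
      ∑ k ∈ Finset.range K, ((if P (2 * k) then 1 else 0) + (if P (2 * k + 1) then 1 else 0)) := by
  rw [Finset.card_filter]
  induction K with
  | zero => simp
  | succ K ih =>
    rw [show 2 * (K + 1) = 2 * K + 1 + 1 by ring, Finset.sum_range_succ, Finset.sum_range_succ, ih,
      Finset.sum_range_succ, add_assoc]

theorem t_sum : ∑ k ∈ Finset.range (n + 2), (if Tn n w k then 1 else 0) =
    ((Finset.Icc 2 n).filter fun i => w (i - 1) ≠ w i).card := by
  rw [← Finset.card_filter]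
  congr 1
  ext k
  rw [Finset.mem_filter, Finset.mem_filter, Finset.mem_range, Finset.mem_Icc]
  constructor
  · rintro ⟨h, h1, h2, h3⟩; exact ⟨⟨h1, h2⟩, h3⟩
  · rintro ⟨⟨h1, h2⟩, h3⟩; exact ⟨by omega, h1, h2, h3⟩

theorem t_sum' : ∑ k ∈ Finset.range (n + 2), (if Tn n w (k + 1) then 1 else 0) =
    ((Finset.Icc 2 n).filter fun i => w (i - 1) ≠ w i).card := by
  rw [← t_sum]
  have h1 := Finset.sum_range_succ' (fun k => if Tn n w k then 1 else 0) (n + 2)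
  have h2 := Finset.sum_range_succ (fun k => if Tn n w k then 1 else 0) (n + 2)
  have h3 : ¬ Tn n w 0 := fun h => by have := h.1; omega
  have h4 : ¬ Tn n w (n + 2) := fun h => by have := h.2.1; omega
  simp only [if_neg h3, if_neg h4, add_zero] at h1 h2
  rw [← h1, h2]

theorem sum_nonneg_pairs (h : ℕ → ℤ) (hh : ∀ k, 0 ≤ h k ∨ ∃ j, k = j + 1 ∧ 0 ≤ h j + h (j + 1)) :
    ∀ K, 0 ≤ ∑ k ∈ Finset.range K, h k := by
  intro K
  induction K using Nat.strong_induction_on with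
  | _ K ih =>
    rcases K with _ | K
    · simp
    · rw [Finset.sum_range_succ]
      rcases hh K with h1 | ⟨j, rfl, h1⟩
      · have := ih K (by omega)
        omega
      · rw [Finset.sum_range_succ]
        have := ih j (by omega)
        omega

/-- index set of the support, pulled back by the normalization -/
noncomputable def supp (n : ℕ) (w : ℕ → Letter) (C : ℕ → ℝ) : Finset ℕ := by
  classical
  exact (Finset.range (2 * n + 4)).filter fun y => lam n w C (sg w y) ≠ 0

theorem mem_supp {C : ℕ → ℝ} {y : ℕ} :
    y ∈ (supp n w C).map (sg w).toEmbedding ↔ lam n w C y ≠ 0 := by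
  classical
  rw [Finset.mem_map_equiv, supp, Finset.mem_filter, Finset.mem_range, Equiv.apply_symm_apply,
    and_iff_right_iff_imp]
  intro h
  rw [← sg_lt (w := w), Equiv.apply_symm_apply]
  by_contra hcon
  exact h (lam_big C (by omega))

theorem supp_sub (C : ℕ → ℝ) :
    (supp n w C).map (sg w).toEmbedding ⊆ Finset.range (2 * n + 6) := by
  intro y hy
  rw [mem_supp] at hy
  rw [Finset.mem_range]
  by_contra hcon
  exact hy (lam_big C (by omega))

/-- few linear conditions admit a nonzero solution -/
theorem exists_sol (F : Finset ℕ) (hF : F.card ≤ n) : ∃ C : ℕ → ℝ, Adm n C ∧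
    (∃ x, lam n w C x ≠ 0) ∧ ∀ y ∈ F, lam n w C (sg w y) = 0 := by
  let ext : (Fin (n + 1) → ℝ) → ℕ → ℝ := fun c j =>
    if h : 1 ≤ j ∧ j ≤ n + 1 then c ⟨j - 1, by omega⟩ else 0
  have ext_add : ∀ c d, ext (c + d) = ext c + ext d := fun c d => by
    funext j
    simp only [ext, Pi.add_apply]
    split <;> simp
  have ext_smul : ∀ (a : ℝ) c, ext (a • c) = a • ext c := fun a c => by
    funext j
    simp only [ext, Pi.smul_apply]
    split <;> simp
  let L : (Fin (n + 1) → ℝ) →ₗ[ℝ] (F → ℝ) :=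
    { toFun := fun c y => lam n w (ext c) (sg w y.1)
      map_add' := fun c d => by funext y; rw [ext_add, lam_add]; rfl
      map_smul' := fun a c => by funext y; rw [ext_smul, lam_smul]; rfl }
  have hk : LinearMap.ker L ≠ ⊥ := by
    apply LinearMap.ker_ne_bot_of_finrank_lt
    simp
    omega
  obtain ⟨c, hc, hc0⟩ := Submodule.exists_mem_ne_zero_of_ne_bot hk
  refine ⟨ext c, ⟨by simp [ext], fun j hj => dif_neg (by omega)⟩, ?_, fun y hy => ?_⟩
  · by_contra hcon
    push Not at hcon
    apply hc0
    funext i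
    have := lam_inj hcon i.1 (by omega)
    simp only [ext] at this
    rw [dif_pos (by omega)] at this
    exact this
  · exact congrFun (LinearMap.mem_ker.1 hc) ⟨y, hy⟩

/-- redundant vanishing conditions -/
def Dr (n : ℕ) (w : ℕ → Letter) (C : ℕ → ℝ) (y : ℕ) : Prop :=
  (y % 2 = 0 ∧ ¬ Tn n w (y / 2) ∧ ¬ Tn n w (y / 2 + 1)) ∨
  (y % 2 = 1 ∧ Tn n w (y / 2) ∧ lam n w C (sg w (y - 3)) = 0 ∧ lam n w C (sg w (y - 2)) = 0 ∧
    lam n w C (sg w (y - 1)) = 0)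

theorem Dr_even {C : ℕ → ℝ} {k : ℕ} : Dr n w C (2 * k) ↔ ¬ Tn n w k ∧ ¬ Tn n w (k + 1) := by
  unfold Dr
  rw [show 2 * k / 2 = k by omega]
  constructor
  · rintro (⟨_, h⟩ | ⟨h, _⟩)
    · exact h
    · omega
  · intro h; exact Or.inl ⟨by omega, h⟩

theorem Dr_odd {C : ℕ → ℝ} {k : ℕ} : Dr n w C (2 * k + 3) ↔ Tn n w (k + 1) ∧
    lam n w C (sg w (2 * k)) = 0 ∧ lam n w C (sg w (2 * k + 1)) = 0 ∧
    lam n w C (sg w (2 * k + 2)) = 0 := by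
  unfold Dr
  rw [show (2 * k + 3) / 2 = k + 1 by omega, show 2 * k + 3 - 3 = 2 * k by omega,
    show 2 * k + 3 - 2 = 2 * k + 1 by omega, show 2 * k + 3 - 1 = 2 * k + 2 by omega]
  constructor
  · rintro (⟨h, _⟩ | ⟨_, h⟩)
    · omega
    · exact h
  · intro h; exact Or.inr ⟨by omega, h⟩

theorem Dr_odd' {C : ℕ → ℝ} {k : ℕ} (h : ¬ Tn n w k) : ¬ Dr n w C (2 * k + 1) := by
  unfold Dr
  rw [show (2 * k + 1) / 2 = k by omega]
  rintro (⟨h, _⟩ | ⟨_, h', _⟩)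
  · omega
  · exact h h'

theorem pair_rel {C : ℕ → ℝ} (hC : Adm n C) {k : ℕ} (h1 : ¬ Tn n w k) (h2 : ¬ Tn n w (k + 1)) :
    lam n w C (sg w (2 * k)) = - lam n w C (sg w (2 * k + 1)) := by
  rw [V_even hC, V_odd hC, if_neg h1, if_neg h2]; ring

theorem quad_rel (hw : InV n w) {C : ℕ → ℝ} (hC : Adm n C) {k : ℕ} (h1 : Tn n w (k + 1)) :
    lam n w C (sg w (2 * k)) + lam n w C (sg w (2 * k + 1)) + lam n w C (sg w (2 * k + 2)) +
      lam n w C (sg w (2 * k + 3)) = 0 := by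
  have e1 := V_even (w := w) hC (k + 1)
  have e2 := V_odd (w := w) hC (k + 1)
  rw [show 2 * (k + 1) = 2 * k + 2 by ring] at e1
  rw [show 2 * (k + 1) + 1 = 2 * k + 3 by ring] at e2
  rw [V_even hC, V_odd hC, e1, e2, if_neg fun h => Tn_next hw h h1, if_pos h1, if_pos h1,
    if_neg (Tn_next hw h1)]
  ring

theorem drop_ok (hw : InV n w) {C C' : ℕ → ℝ} (hC : Adm n C) (hC' : Adm n C')
    (h : ∀ y < 2 * n + 4, lam n w C (sg w y) = 0 → ¬ Dr n w C y → lam n w C' (sg w y) = 0) :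
    ∀ y < 2 * n + 4, lam n w C (sg w y) = 0 → lam n w C' (sg w y) = 0 := by
  intro y hy h0
  by_cases hd : Dr n w C y
  swap
  · exact h y hy h0 hd
  rcases Nat.even_or_odd' y with ⟨k, rfl | rfl⟩
  · have hd' := Dr_even.1 hd
    rw [pair_rel hC' hd'.1 hd'.2, neg_eq_zero]
    rw [pair_rel hC hd'.1 hd'.2, neg_eq_zero] at h0
    exact h _ (by omega) h0 (Dr_odd' hd'.1)
  · rcases k with _ | k
    · exact absurd hd (Dr_odd' fun h => by have := h.1; omega)
    · rw [show 2 * (k + 1) + 1 = 2 * k + 3 by ring] at *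
      obtain ⟨ht, h1, h2, h3⟩ := Dr_odd.1 hd
      have q := quad_rel hw hC' ht
      have ht' : ¬ Tn n w k := fun h => Tn_next hw h ht
      have a1 := h (2 * k) (by omega) h1 (fun h => (Dr_even.1 h).2 ht)
      have a2 := h (2 * k + 1) (by omega) h2 (Dr_odd' ht')
      have a3 := h (2 * k + 2) (by omega) h3 (fun h => by
        rw [show 2 * k + 2 = 2 * (k + 1) by ring] at h
        exact (Dr_even.1 h).1 ht)
      linarith

open Classical in
theorem count_bound (hw : InV n w) {C : ℕ → ℝ} (hC : Adm n C) :
    2 * ((Finset.range (2 * n + 4)).filter fun y => lam n w C (sg w y) = 0 ∧ ¬ Dr n w C y).card ≤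
    ((Finset.range (2 * n + 4)).filter fun y => lam n w C (sg w y) = 0).card +
      2 * ((Finset.Icc 2 n).filter fun i => w (i - 1) ≠ w i).card := by
  rw [show 2 * n + 4 = 2 * (n + 2) by ring, card_pairs, card_pairs, ← t_sum']
  let v : ℕ → ℤ := fun k => (if lam n w C (sg w (2 * k)) = 0 then 1 else 0) +
    (if lam n w C (sg w (2 * k + 1)) = 0 then 1 else 0)
  let f : ℕ → ℤ := fun k => (if lam n w C (sg w (2 * k)) = 0 ∧ ¬ Dr n w C (2 * k) then 1 else 0) +
    (if lam n w C (sg w (2 * k + 1)) = 0 ∧ ¬ Dr n w C (2 * k + 1) then 1 else 0)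
  let h : ℕ → ℤ := fun k => v k + 2 * (if Tn n w (k + 1) then 1 else 0) - 2 * f k
  have key : 0 ≤ ∑ k ∈ Finset.range (n + 2), h k := by
    apply sum_nonneg_pairs
    intro k
    by_cases c1 : Tn n w (k + 1)
    · left
      simp only [h, v, f, if_pos c1]
      split_ifs <;> simp_all
    · by_cases c2 : Tn n w k
      · right
        obtain ⟨j, rfl⟩ : ∃ j, k = j + 1 := ⟨k - 1, by have := c2.1; omega⟩
        refine ⟨j, rfl, ?_⟩
        have c3 : ¬ Tn n w j := fun h => Tn_next hw h c2
        have q := quad_rel hw hC c2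
        have d1 : ¬ Dr n w C (2 * j) := fun h => (Dr_even.1 h).2 c2
        have d2 : ¬ Dr n w C (2 * j + 1) := Dr_odd' c3
        have d3 : ¬ Dr n w C (2 * (j + 1)) := fun h => (Dr_even.1 h).1 c2
        have d4 := Dr_odd (n := n) (w := w) (C := C) (k := j)
        simp only [h, v, f, if_pos c2, if_neg c1]
        rw [show 2 * (j + 1) + 1 = 2 * j + 3 by ring]
        rw [show 2 * (j + 1) = 2 * j + 2 by ring] at *
        generalize lam n w C (sg w (2 * j)) = x1 at *
        generalize lam n w C (sg w (2 * j + 1)) = x2 at *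
        generalize lam n w C (sg w (2 * j + 2)) = x3 at *
        generalize lam n w C (sg w (2 * j + 3)) = x4 at *
        simp only [c2, true_and] at d4
        simp only [d1, d2, d3, d4, not_false_eq_true, and_true]
        by_cases e1 : x1 = 0 <;> by_cases e2 : x2 = 0 <;> by_cases e3 : x3 = 0 <;>
          by_cases e4 : x4 = 0 <;> simp [e1, e2, e3, e4] <;> simp_all
      · left
        have r := pair_rel hC c2 c1
        have d1 : Dr n w C (2 * k) := Dr_even.2 ⟨c2, c1⟩
        have d2 : ¬ Dr n w C (2 * k + 1) := Dr_odd' c2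
        simp only [h, v, f, if_neg c1, r, neg_eq_zero, d1, d2]
        split_ifs <;> simp_all
  simp only [h, v, f, Finset.sum_sub_distrib, Finset.sum_add_distrib, ← Finset.mul_sum] at key
  have key' : (0 : ℤ) ≤ _ := key
  zify
  simp only [Finset.sum_add_distrib]
  linarith

theorem upper (hw : InV n w) {X : Finset ℕ} (hX : X ⊆ Finset.range (2 * n + 6))
    (hc : IsAffCircuit (ph n w '' (X : Set ℕ))) :
    X.card ≤ 4 + 2 * ((Finset.Icc 2 n).filter fun i => w (i - 1) ≠ w i).card := by
  classical
  rw [circuit_iff hX] at hc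
  obtain ⟨⟨l, hl, hlX, x0, hx0⟩, huniq⟩ := hc
  obtain ⟨C, hC0, hC1, hlC⟩ := exists_lam hl
  have hC : Adm n C := ⟨hC0, hC1⟩
  have hXs : X = (supp n w C).map (sg w).toEmbedding := by
    ext y
    rw [mem_supp, ← hlC]
    constructor
    · intro hy h0
      exact hx0 (huniq l hl hlX ⟨y, hy, h0⟩ x0)
    · intro h
      by_contra h'
      exact h (hlX y h')
  have hcard : X.card = ((Finset.range (2 * n + 4)).filter fun y => ¬ lam n w C (sg w y) = 0).card := by
    rw [hXs, Finset.card_map]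
    unfold supp
    congr
  have hsum := Finset.card_filter_add_card_filter_not (s := Finset.range (2 * n + 4))
    (fun y => lam n w C (sg w y) = 0)
  rw [Finset.card_range, ← hcard] at hsum
  have hb := count_bound hw hC
  by_contra hcon
  obtain ⟨C', hC', ⟨z, hz⟩, hF⟩ := exists_sol (n := n) (w := w)
    (insert ((sg w).symm x0) ((Finset.range (2 * n + 4)).filter
      fun y => lam n w C (sg w y) = 0 ∧ ¬ Dr n w C y))
    ((Finset.card_insert_le _ _).trans (by omega))
  have hx0X : x0 ∈ X := by
    by_contra h
    exact hx0 (hlX x0 h)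
  refine hz (huniq (lam n w C') (dep_lam C') (fun x hx => ?_) ⟨x0, hx0X, ?_⟩ z)
  · by_cases hlt : x < 2 * n + 4
    · have := drop_ok hw hC hC' (fun y hy h0 hd => hF y (Finset.mem_insert_of_mem
        (Finset.mem_filter.2 ⟨Finset.mem_range.2 hy, h0, hd⟩))) ((sg w).symm x)
        (by rw [← sg_lt (w := w), Equiv.apply_symm_apply]; exact hlt)
        (by rw [Equiv.apply_symm_apply, ← hlC]; exact hlX x hx)
      rwa [Equiv.apply_symm_apply] at this
    · exact lam_big C' (by omega)
  · have := hF _ (Finset.mem_insert_self _ _)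
    rwa [Equiv.apply_symm_apply] at this

theorem exists_four : ∃ X : Finset ℕ, X ⊆ Finset.range (2 * n + 6) ∧
    IsAffCircuit (ph n w '' (X : Set ℕ)) ∧ X.card = 4 := by
  have hX : ({0, 1, 2, 3} : Finset ℕ) ⊆ Finset.range (2 * n + 6) := by
    intro x hx
    simp only [Finset.mem_insert, Finset.mem_singleton] at hx
    rw [Finset.mem_range]; omega
  refine ⟨{0, 1, 2, 3}, hX, ?_, rfl⟩
  rw [circuit_iff hX]
  constructor
  · let C : ℕ → ℝ := fun j => if j = 1 then 1 else 0
    have hval : ∀ x, lam n w C x = sq w 0 x := fun x => by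
      unfold lam
      rw [Finset.sum_eq_single 0]
      · simp [C]
      · intro m _ hm
        simp [C, hm]
      · intro h; simp at h
    refine ⟨lam n w C, dep_lam C, fun x hx => ?_, 3, ?_⟩
    · simp only [Finset.mem_insert, Finset.mem_singleton, not_or] at hx
      rw [hval]
      simp [sq, side_zero, hx]
    · rw [hval]
      simp [sq, side_zero]
  · rintro l hl hlX ⟨y, hy, hly⟩
    by_contra hcon
    push Not at hcon
    have := four_le hl hcon (X := ({0, 1, 2, 3} : Finset ℕ).erase y)
      ((Finset.erase_subset _ _).trans hX) (fun x hx => by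
        by_cases hxy : x = y
        · rw [hxy, hly]
        · exact hlX x fun h => hx (Finset.mem_erase.2 ⟨hxy, h⟩))
    rw [Finset.card_erase_of_mem hy] at this
    simp at this

theorem exists_max (hw : InV n w) : ∃ X : Finset ℕ, X ⊆ Finset.range (2 * n + 6) ∧
    IsAffCircuit (ph n w '' (X : Set ℕ)) ∧
      X.card = 4 + 2 * ((Finset.Icc 2 n).filter fun i => w (i - 1) ≠ w i).card := by
  classical
  let C : ℕ → ℝ := fun j => if 1 ≤ j ∧ j ≤ n + 1 then 1 else 0
  have hC : Adm n C := ⟨by simp [C], fun j hj => if_neg (by omega)⟩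
  have ev : ∀ k < n + 2, lam n w C (sg w (2 * k)) ≠ 0 ↔ (k = 0 ∨ k = n + 1 ∨ Tn n w k) := by
    intro k hk
    rw [V_even hC]
    by_cases ht : Tn n w k
    · have h1 := ht.1
      have h2 := ht.2.1
      simp only [C, ht, if_true, or_true, iff_true]
      rw [if_pos (by omega)]; norm_num
    · simp only [C, ht, if_false, or_false]
      by_cases h0 : k = 0
      · subst h0; simp
      · by_cases h1 : k = n + 1
        · subst h1; simp
        · rw [if_pos (by omega), if_pos (by omega)]
          simp [h0, h1]
  have od : ∀ k < n + 2, lam n w C (sg w (2 * k + 1)) ≠ 0 ↔ (k = 0 ∨ k = n + 1 ∨ Tn n w (k + 1)) := by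
    intro k hk
    rw [V_odd hC]
    by_cases ht : Tn n w (k + 1)
    · have h1 := ht.1
      have h2 := ht.2.1
      simp only [C, ht, if_true, or_true, iff_true]
      rw [if_pos (by omega), if_pos (by omega), if_pos (by omega)]; norm_num
    · simp only [C, ht, if_false, or_false]
      by_cases h0 : k = 0
      · subst h0; simp
      · by_cases h1 : k = n + 1
        · subst h1; simp
        · rw [if_pos (by omega), if_pos (by omega)]
          simp [h0, h1]
  refine ⟨(supp n w C).map (sg w).toEmbedding, supp_sub C, ?_, ?_⟩
  · rw [circuit_iff (supp_sub C)]
    constructor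
    · refine ⟨lam n w C, dep_lam C, fun x hx => ?_, sg w 0, ?_⟩
      · rw [mem_supp, not_not] at hx; exact hx
      · have := (ev 0 (by omega)).2 (Or.inl rfl)
        exact this
    · rintro l hl hlX ⟨y, hy, hly⟩
      obtain ⟨D, hD0, hD1, hlD⟩ := exists_lam hl
      have hD : Adm n D := ⟨hD0, hD1⟩
      have van : ∀ z, lam n w C (sg w z) = 0 → lam n w D (sg w z) = 0 := by
        intro z hz
        rw [← hlD]
        apply hlX
        rw [mem_supp, not_not]; exact hz
      have step : ∀ k, 1 ≤ k → k ≤ n → D (k + 1) = D k := by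
        intro k h1 h2
        by_cases ht : Tn n w k
        · have hn := Tn_next hw ht
          have := van (2 * k + 1) (by
            by_contra hne
            rcases (od k (by omega)).1 hne with h | h | h
            · omega
            · omega
            · exact hn h)
          rw [V_odd hD, if_neg hn] at this
          linarith
        · have := van (2 * k) (by
            by_contra hne
            rcases (ev k (by omega)).1 hne with h | h | h
            · omega
            · omega
            · exact ht h)
          rw [V_even hD, if_neg ht] at this
          linarith
      have const : ∀ k ≤ n, D (k + 1) = D 1 := by
        intro k
        induction k with
        | zero => intro _; rfl
        | succ k ih => intro hk; rw [step (k + 1) (by omega) hk, ih (by omega)]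
      have hDC : D = D 1 • C := by
        funext j
        simp only [Pi.smul_apply, smul_eq_mul, C]
        by_cases hj : 1 ≤ j ∧ j ≤ n + 1
        · rw [if_pos hj, mul_one]
          have := const (j - 1) (by omega)
          rwa [show j - 1 + 1 = j by omega] at this
        · rw [if_neg hj, mul_zero]
          rcases (by omega : j = 0 ∨ n + 2 ≤ j) with rfl | hj
          · exact hD0
          · exact hD1 j hj
      rw [mem_supp] at hy
      rw [hlD, hDC, lam_smul] at hly
      have hD1 : D 1 = 0 := by
        rcases mul_eq_zero.1 hly with h | h
        · exact h
        · exact absurd h hy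
      intro x
      rw [hlD, hDC, lam_smul, hD1, zero_mul]
  · rw [Finset.card_map]
    unfold supp
    rw [show 2 * n + 4 = 2 * (n + 2) by ring, card_pairs]
    have : ∀ k ∈ Finset.range (n + 2),
        ((if lam n w C (sg w (2 * k)) ≠ 0 then 1 else 0) +
          (if lam n w C (sg w (2 * k + 1)) ≠ 0 then 1 else 0) : ℕ) =
        (if k = 0 then 2 else 0) + (if k = n + 1 then 2 else 0) + (if Tn n w k then 1 else 0) +
          (if Tn n w (k + 1) then 1 else 0) := by
      intro k hk
      rw [Finset.mem_range] at hk
      simp only [ev k hk, od k hk]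
      by_cases h0 : k = 0
      · have a : ¬ Tn n w k := fun h => by have := h.1; omega
        have b : ¬ Tn n w (k + 1) := fun h => by have := h.1; omega
        have c : k ≠ n + 1 := by omega
        simp [h0, a, b, c] at *
        simp [a, b]
      · by_cases h1 : k = n + 1
        · have a : ¬ Tn n w k := fun h => by have := h.2.1; omega
          have b : ¬ Tn n w (k + 1) := fun h => by have := h.2.1; omega
          subst h1
          simp [a, b]
        · simp [h0, h1]
    rw [Finset.sum_congr rfl this]
    simp only [Finset.sum_add_distrib, t_sum, t_sum', Finset.sum_ite_eq', Finset.mem_range]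
    rw [if_pos (by omega), if_pos (by omega)]
    ring

end Snake13

theorem stmt13 (n : ℕ) (w : ℕ → Letter) (hw : InV n w) :
    (∀ Z : Set (SnakeQ n w → ℝ), Z ⊆ OPVertexSet (SnakeQ n w) → IsAffCircuit Z →
      4 ≤ Z.ncard ∧
        Z.ncard ≤ 4 + 2 * ((Finset.Icc 2 n).filter fun i => w (i - 1) ≠ w i).card) ∧
    (∃ Z : Set (SnakeQ n w → ℝ),
      Z ⊆ OPVertexSet (SnakeQ n w) ∧ IsAffCircuit Z ∧ Z.ncard = 4) ∧
    (∃ Z : Set (SnakeQ n w → ℝ),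
      Z ⊆ OPVertexSet (SnakeQ n w) ∧ IsAffCircuit Z ∧
        Z.ncard = 4 + 2 * ((Finset.Icc 2 n).filter fun i => w (i - 1) ≠ w i).card) := by
  refine ⟨fun Z hZ hc => ?_, ?_, ?_⟩
  · obtain ⟨X, hX, rfl⟩ := Snake13.exists_X hZ
    rw [Snake13.ncard_X hX]
    refine ⟨?_, Snake13.upper hw hX hc⟩
    obtain ⟨⟨l, hl, hlX, hne⟩, -⟩ := (Snake13.circuit_iff hX).1 hc
    exact Snake13.four_le hl hne hX hlX
  · obtain ⟨X, hX, hc, h⟩ := Snake13.exists_four (n := n) (w := w)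
    exact ⟨_, Snake13.image_mem hX, hc, by rw [Snake13.ncard_X hX, h]⟩
  · obtain ⟨X, hX, hc, h⟩ := Snake13.exists_max hw
    exact ⟨_, Snake13.image_mem hX, hc, by rw [Snake13.ncard_X hX, h]⟩
end
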